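/- arXiv:2404.14972 — 2 statements merged into one kernel-verified Lean document; each statement's English description precedes it below -/
import Mathlib

section
/- Fix τ ∈ (2,3), an integer d ≥ 1, a graph H on [k] with edge set E_H, and γ > 1. A vector (α*,β*) ∈ F maximizes f_H^{(d)} over F if and only if (α*,β*) maximizes the function f(α,β) = k + (1−τ) Σ_{i=1}^k α_i + d Σ_{j=2}^k min_{i<j} β_{ij} over the set of (α,β) ∈ F satisfying α_i + α_j ≥ 1 + d β_{ij} for all (i,j) ∈ E_H. In particular, the set of optimal solutions of the general optimization problem does not depend on γ ∈ (1,∞). -/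
open MeasureTheory Filter Finset

noncomputable section

instance : Fact ((0:ℝ) < 1) := ⟨one_pos⟩

/-- The `d`-dimensional torus `ℝ^d/ℤ^d`, with the sup of coordinatewise circle distances. -/
abbrev Torus (d : ℕ) := Fin d → AddCircle (1 : ℝ)

/-- Sample space of the GIRG on `n` vertices: weights, positions, and iid uniform
`[0,1]` coins deciding the presence of each potential edge. -/
abbrev GirgΩ (d n : ℕ) := (Fin n → ℝ) × (Fin n → Torus d) × (Sym2 (Fin n) → ℝ)

/-- The law of the randomness of the GIRG: iid weights with law `μW`, iid uniform positions
on the torus, iid uniform coins. -/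
def girgMeasure (μW : Measure ℝ) (d n : ℕ) : Measure (GirgΩ d n) :=
  (Measure.pi fun _ : Fin n => μW).prod
    ((Measure.pi fun _ : Fin n => (volume : Measure (Torus d))).prod
      (Measure.pi fun _ : Sym2 (Fin n) => volume.restrict (Set.Icc (0:ℝ) 1)))

/-- mean `μ = E[W]` of the weight distribution -/
def wMean (μW : Measure ℝ) : ℝ := ∫ x, x ∂μW

/-- Power-law tail assumption: `W ≥ 1` a.s. and `P(W > x) = c x^{1-τ} (1+o(1))` as `x → ∞`. -/
def WeightTail (τ c : ℝ) (μW : Measure ℝ) : Prop :=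
  0 < c ∧ μW (Set.Iio 1) = 0 ∧
    Tendsto (fun x : ℝ => (μW (Set.Ioi x)).toReal / (c * x ^ (1 - τ))) atTop (nhds 1)

/-- GIRG connection probability `min(1, (w_u w_v / (n μ ‖x_u - x_v‖^d))^γ)`. -/
def connProb (γ μbar : ℝ) (d n : ℕ) (w : Fin n → ℝ) (x : Fin n → Torus d)
    (u v : Fin n) : ℝ :=
  min 1 ((w u * w v / ((n : ℝ) * μbar * dist (x u) (x v) ^ d)) ^ γ)

/-- `u` and `v` are joined by an edge of the GIRG in outcome `ω`. -/
def girgEdge (γ μbar : ℝ) (d n : ℕ) (ω : GirgΩ d n) (u v : Fin n) : Prop :=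
  u ≠ v ∧ ω.2.2 s(u, v) ≤ connProb γ μbar d n ω.1 ω.2.1 u v

/-- the window `[ε t, t/ε]` -/
def windowIcc (ε t : ℝ) : Set ℝ := Set.Icc (ε * t) (t / ε)

/-- The set `M_ε^{(α,β)}` of ordered `k`-tuples of distinct vertices with prescribed
weights and inter-distances. -/
def Mset {k : ℕ} (ε : ℝ) (α : Fin k → ℝ) (β : Fin k → Fin k → ℝ) (d n : ℕ)
    (w : Fin n → ℝ) (x : Fin n → Torus d) : Set (Fin k → Fin n) :=
  {v | Function.Injective v ∧
    (∀ i, w (v i) ∈ windowIcc ε ((n : ℝ) ^ (α i))) ∧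
    (∀ i j : Fin k, i < j → dist (x (v i)) (x (v j)) ∈ windowIcc ε ((n : ℝ) ^ (β i j)))}

/-- `N^{sub}(H; M_ε^{(α,β)})` -/
def nSubM {k : ℕ} (H : SimpleGraph (Fin k)) (γ μbar ε : ℝ) (α : Fin k → ℝ)
    (β : Fin k → Fin k → ℝ) (d n : ℕ) (ω : GirgΩ d n) : ℕ :=
  Set.ncard {v : Fin k → Fin n | v ∈ Mset ε α β d n ω.1 ω.2.1 ∧
    ∀ i j : Fin k, H.Adj i j → girgEdge γ μbar d n ω (v i) (v j)}

/-- `N^{ind}(H; M_ε^{(α,β)})` -/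
def nIndM {k : ℕ} (H : SimpleGraph (Fin k)) (γ μbar ε : ℝ) (α : Fin k → ℝ)
    (β : Fin k → Fin k → ℝ) (d n : ℕ) (ω : GirgΩ d n) : ℕ :=
  Set.ncard {v : Fin k → Fin n | v ∈ Mset ε α β d n ω.1 ω.2.1 ∧
    ∀ i j : Fin k, i ≠ j → (H.Adj i j ↔ girgEdge γ μbar d n ω (v i) (v j))}

/-- `N^{sub}(H)` -/
def nSubTotal {k : ℕ} (H : SimpleGraph (Fin k)) (γ μbar : ℝ) (d n : ℕ)
    (ω : GirgΩ d n) : ℕ :=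
  Set.ncard {v : Fin k → Fin n | Function.Injective v ∧
    ∀ i j : Fin k, H.Adj i j → girgEdge γ μbar d n ω (v i) (v j)}

/-- `N^{ind}(H)` -/
def nIndTotal {k : ℕ} (H : SimpleGraph (Fin k)) (γ μbar : ℝ) (d n : ℕ)
    (ω : GirgΩ d n) : ℕ :=
  Set.ncard {v : Fin k → Fin n | Function.Injective v ∧
    ∀ i j : Fin k, i ≠ j → (H.Adj i j ↔ girgEdge γ μbar d n ω (v i) (v j))}

/-- `β` read as a symmetric matrix (only entries with `i < j` are meaningful). -/
def bsym {k : ℕ} (β : Fin k → Fin k → ℝ) (i j : Fin k) : ℝ := if i < j then β i j else β j i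

/-- The feasible region `F`. -/
def Feasible (τ : ℝ) (d : ℕ) {k : ℕ} (α : Fin k → ℝ) (β : Fin k → Fin k → ℝ) : Prop :=
  (∀ i, α i ∈ Set.Icc (0 : ℝ) (1 / (τ - 1))) ∧
  (∀ i j : Fin k, i < j → β i j ∈ Set.Icc (-(1 / (d : ℝ))) 0) ∧
  (∀ i j s : Fin k, i < j → s ≠ i → s ≠ j → β i j ≤ max (bsym β i s) (bsym β j s))

/-- `min_{i<j} β_{ij}` (with value `0 = sInf ∅` for the first vertex `j`,
which does not contribute). -/
def minBeta {k : ℕ} (β : Fin k → Fin k → ℝ) (j : Fin k) : ℝ :=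
  sInf {x : ℝ | ∃ i, i < j ∧ x = β i j}

open scoped Classical in
/-- The exponent `f_H(α,β)`. -/
def fExp (τ γ : ℝ) (d : ℕ) {k : ℕ} (H : SimpleGraph (Fin k))
    (α : Fin k → ℝ) (β : Fin k → Fin k → ℝ) : ℝ :=
  (k : ℝ) + (1 - τ) * ∑ i, α i + (d : ℝ) * ∑ j, minBeta β j +
    γ * ∑ p ∈ Finset.univ.filter (fun p : Fin k × Fin k => p.1 < p.2 ∧ H.Adj p.1 p.2),
        min (α p.1 + α p.2 - (d : ℝ) * β p.1 p.2 - 1) 0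

/-- Extra constraints for the induced optimization problem:
`α_i + α_j ≤ 1 + d β_{ij}` for all non-edges. -/
def IndConstr (d : ℕ) {k : ℕ} (H : SimpleGraph (Fin k)) (α : Fin k → ℝ)
    (β : Fin k → Fin k → ℝ) : Prop :=
  ∀ i j : Fin k, i < j → ¬H.Adj i j → α i + α j ≤ 1 + (d : ℝ) * β i j

/-- `(α,β)` is an optimal solution of the general optimization problem. -/
def IsOptimalSub (τ γ : ℝ) (d : ℕ) {k : ℕ} (H : SimpleGraph (Fin k))
    (α : Fin k → ℝ) (β : Fin k → Fin k → ℝ) : Prop :=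
  Feasible τ d α β ∧
    ∀ α' β', Feasible τ d α' β' → fExp τ γ d H α' β' ≤ fExp τ γ d H α β

/-- `(α,β)` is an optimal solution of the induced optimization problem. -/
def IsOptimalInd (τ γ : ℝ) (d : ℕ) {k : ℕ} (H : SimpleGraph (Fin k))
    (α : Fin k → ℝ) (β : Fin k → Fin k → ℝ) : Prop :=
  Feasible τ d α β ∧ IndConstr d H α β ∧
    ∀ α' β', Feasible τ d α' β' → IndConstr d H α' β' →
      fExp τ γ d H α' β' ≤ fExp τ γ d H α β

/-- the two kinds of subgraph counts -/
inductive StarKind | ind | sub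

/-- `N^⋆(H; M_ε^{(α,β)})` -/
def starNM (s : StarKind) {k : ℕ} (H : SimpleGraph (Fin k)) (γ μbar ε : ℝ) (α : Fin k → ℝ)
    (β : Fin k → Fin k → ℝ) (d n : ℕ) (ω : GirgΩ d n) : ℕ :=
  match s with
  | .sub => nSubM H γ μbar ε α β d n ω
  | .ind => nIndM H γ μbar ε α β d n ω

/-- `N^⋆(H)` -/
def starNTotal (s : StarKind) {k : ℕ} (H : SimpleGraph (Fin k)) (γ μbar : ℝ) (d n : ℕ)
    (ω : GirgΩ d n) : ℕ :=
  match s with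
  | .sub => nSubTotal H γ μbar d n ω
  | .ind => nIndTotal H γ μbar d n ω

/-- optimality in the optimization problem corresponding to `⋆` -/
def starIsOptimal (s : StarKind) (τ γ : ℝ) (d : ℕ) {k : ℕ} (H : SimpleGraph (Fin k))
    (α : Fin k → ℝ) (β : Fin k → Fin k → ℝ) : Prop :=
  match s with
  | .sub => IsOptimalSub τ γ d H α β
  | .ind => IsOptimalInd τ γ d H α β

/-- the optimal value `f_H^*` of the optimization problem corresponding to `⋆` -/
def starOptVal (s : StarKind) (τ γ : ℝ) (d : ℕ) {k : ℕ} (H : SimpleGraph (Fin k)) : ℝ :=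
  match s with
  | .sub => sSup {x | ∃ α β, Feasible τ d α β ∧ x = fExp τ γ d H α β}
  | .ind => sSup {x | ∃ α β, Feasible τ d α β ∧ IndConstr d H α β ∧ x = fExp τ γ d H α β}

/-- `(α,β)` is the unique optimal solution (in the `α`-variables and the
`β`-variables with `i < j`). -/
def UniquelyOptimal (s : StarKind) (τ γ : ℝ) (d : ℕ) {k : ℕ} (H : SimpleGraph (Fin k))
    (α : Fin k → ℝ) (β : Fin k → Fin k → ℝ) : Prop :=
  starIsOptimal s τ γ d H α β ∧
    ∀ α' β', starIsOptimal s τ γ d H α' β' →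
      α' = α ∧ ∀ i j : Fin k, i < j → β' i j = β i j


/-- the "edge-energy" constraints `α_i + α_j ≥ 1 + d β_{ij}` for all edges of `H` -/
def EdgeConstr (d : ℕ) {k : ℕ} (H : SimpleGraph (Fin k)) (α : Fin k → ℝ)
    (β : Fin k → Fin k → ℝ) : Prop :=
  ∀ i j : Fin k, i < j → H.Adj i j → 1 + (d : ℝ) * β i j ≤ α i + α j

/-- the linear part `f(α,β) = k + (1-τ) Σ α_i + d Σ_j min_{i<j} β_{ij}` of the objective -/
def fLin (τ : ℝ) (d : ℕ) {k : ℕ} (α : Fin k → ℝ) (β : Fin k → Fin k → ℝ) : ℝ :=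
  (k : ℝ) + (1 - τ) * ∑ i, α i + (d : ℝ) * ∑ j, minBeta β j

/-!
The penalty `γ ∑ min(α_i + α_j - d β_{ij} - 1, 0)` is exact as soon as every feasible point can be
made to satisfy all edge constraints at a loss in the linear objective of at most the total
violation: with `γ > 1`, violating a constraint then costs more than it gains.

Such a repair leaves `α` alone and treats one edge at a time. To satisfy the constraint of the edge
`uv`, lower `β_{uv}` to some `a` and pass to the largest ultrametric below the result. At every
level `t` this only changes the partition into classes of `β ≤ t`, by merging the classes of `u`
and `v`, and only if `a ≤ t < β_{uv}`. Since `min_{i<j} β_{ij} > t` says that `j` is the first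
element of its class, at most one `j` loses this property at each level, so that
`∑_j min_{i<j} β_{ij}` drops by at most the length `β_{uv} - a` of the range of levels.
-/

section ExactPenalty

variable {X R : Type*} [CommRing R] [LinearOrder R] [IsStrictOrderedRing R]

theorem isMaxOn_add_mul_penalty_iff {s : Set X} {f p : X → R} {γ : R} (hγ : 1 < γ)
    (hp : ∀ x ∈ s, p x ≤ 0) (hrepair : ∀ x ∈ s, ∃ y ∈ s, p y = 0 ∧ f x + p x ≤ f y) {x : X} :
    x ∈ s ∧ IsMaxOn (fun y => f y + γ * p y) s x ↔
      x ∈ s ∧ p x = 0 ∧ IsMaxOn f {y ∈ s | p y = 0} x := by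
  simp only [isMaxOn_iff, Set.mem_ofPred_eq, and_imp]
  constructor
  · rintro ⟨hx, hmax⟩
    have hpx : p x = 0 := by
      obtain ⟨y, hy, hpy, hle⟩ := hrepair x hx
      have hyx := hmax y hy
      rw [hpy, mul_zero, add_zero] at hyx
      have hnonneg : 0 ≤ (γ - 1) * p x := by linarith
      exact le_antisymm (hp x hx) (nonneg_of_mul_nonneg_right hnonneg (sub_pos.2 hγ))
    refine ⟨hx, hpx, fun y hy hpy => ?_⟩
    simpa [hpx, hpy] using hmax y hy
  · rintro ⟨hx, hpx, hmax⟩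
    refine ⟨hx, fun y hy => ?_⟩
    obtain ⟨z, hz, hpz, hle⟩ := hrepair y hy
    calc f y + γ * p y ≤ f y + p y := by
          gcongr
          exact mul_le_of_one_le_left (hp y hy) hγ.le
      _ ≤ f z := hle
      _ ≤ f x := hmax z hz hpz
      _ = f x + γ * p x := by rw [hpx, mul_zero, add_zero]

end ExactPenalty

theorem sum_sub_le_of_pairwiseDisjoint_Ico {ι : Type*} {s : Finset ι} {l r : ι → ℝ} {a b : ℝ}
    (hab : a ≤ b) (hdisj : (s : Set ι).PairwiseDisjoint fun i => Set.Ico (l i) (r i))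
    (hsub : ∀ i ∈ s, Set.Ico (l i) (r i) ⊆ Set.Ico a b) :
    ∑ i ∈ s, (r i - l i) ≤ b - a :=
  calc ∑ i ∈ s, (r i - l i) ≤ ∑ i ∈ s, volume.real (Set.Ico (l i) (r i)) :=
        Finset.sum_le_sum fun _ _ => Real.volume_real_Ico.symm ▸ le_max_left _ _
    _ = volume.real (⋃ i ∈ s, Set.Ico (l i) (r i)) :=
        (measureReal_biUnion_finset hdisj (fun _ _ => measurableSet_Ico)
          fun _ _ => measure_Ico_lt_top.ne).symm
    _ ≤ volume.real (Set.Ico a b) :=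
        measureReal_mono (Set.iUnion₂_subset hsub) measure_Ico_lt_top.ne
    _ = b - a := Real.volume_real_Ico_of_le hab

section Ultrametric

variable {ι R : Type*} [LinearOrder R]

/-- A symmetric matrix satisfying the strong triangle inequality. Unlike for a distance, entries
may be negative and the diagonal need not vanish. -/
structure IsUltrametricMatrix (B : ι → ι → R) : Prop where
  symm : ∀ i j, B i j = B j i
  le_max : ∀ i s j, B i j ≤ max (B i s) (B s j)

/-- For an ultrametric matrix `B` whose diagonal entries are at most `a`, the largest ultrametric
matrix below `B` with entry at most `a` at `u`, `v`. The two maxima are the costs of going from `i`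
to `j` through the lowered entry, in either direction. -/
def lowerEntry (B : ι → ι → R) (u v : ι) (a : R) (i j : ι) : R :=
  min (B i j) (max a (min (max (B i u) (B v j)) (max (B i v) (B u j))))

theorem lowerEntry_le_iff {B : ι → ι → R} {u v : ι} {a : R} {i j : ι} {t : R} :
    lowerEntry B u v a i j ≤ t ↔
      B i j ≤ t ∨ a ≤ t ∧ (B i u ≤ t ∧ B v j ≤ t ∨ B i v ≤ t ∧ B u j ≤ t) := by
  simp only [lowerEntry, min_le_iff, max_le_iff]

theorem lowerEntry_le (B : ι → ι → R) (u v : ι) (a : R) (i j : ι) :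
    lowerEntry B u v a i j ≤ B i j :=
  min_le_left _ _

namespace IsUltrametricMatrix

variable {B : ι → ι → R}

theorem le_comm (hB : IsUltrametricMatrix B) {i j : ι} {t : R} : B i j ≤ t ↔ B j i ≤ t := by
  rw [hB.symm]

protected theorem le_trans (hB : IsUltrametricMatrix B) {i s j : ι} {t : R} (his : B i s ≤ t)
    (hsj : B s j ≤ t) : B i j ≤ t :=
  (hB.le_max i s j).trans (max_le his hsj)

protected theorem lowerEntry (hB : IsUltrametricMatrix B) (u v : ι) (a : R) :
    IsUltrametricMatrix (lowerEntry B u v a) where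
  symm i j := eq_of_forall_ge_iff fun t => by
    rw [lowerEntry_le_iff, lowerEntry_le_iff, hB.symm j i, hB.symm j u, hB.symm v i, hB.symm j v,
      hB.symm u i]
    tauto
  le_max i s j := by
    refine le_of_forall_ge fun t ht => ?_
    rw [max_le_iff] at ht
    simp only [lowerEntry_le_iff] at ht ⊢
    have htrans : ∀ {x y z}, B x y ≤ t → B y z ≤ t → B x z ≤ t := hB.le_trans
    grind

end IsUltrametricMatrix

end Ultrametric

section MinBeta

variable {k : ℕ}

theorem minBeta_eq_sInf_image (β : Fin k → Fin k → ℝ) (j : Fin k) :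
    minBeta β j = sInf ((β · j) '' Set.Iio j) := by
  simp only [minBeta, Set.image, Set.mem_Iio, eq_comm]

theorem minBeta_congr {β β' : Fin k → Fin k → ℝ} {j : Fin k} (h : ∀ i < j, β i j = β' i j) :
    minBeta β j = minBeta β' j := by
  rw [minBeta_eq_sInf_image, minBeta_eq_sInf_image]
  exact congrArg sInf (Set.image_congr h)

theorem minBeta_of_isMin (β : Fin k → Fin k → ℝ) {j : Fin k} (hj : IsMin j) : minBeta β j = 0 := by
  rw [minBeta_eq_sInf_image, Set.Iio_eq_empty_iff.2 hj, Set.image_empty, Real.sInf_empty]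

theorem lt_minBeta_iff {β : Fin k → Fin k → ℝ} {j : Fin k} (hj : ¬IsMin j) {t : ℝ} :
    t < minBeta β j ↔ ∀ i < j, t < β i j := by
  have hne : (Set.Iio j).Nonempty := not_isMin_iff.1 hj
  rw [minBeta_eq_sInf_image, (Set.toFinite _).lt_csInf_iff (hne.image _)]
  simp

theorem minBeta_le_iff {β : Fin k → Fin k → ℝ} {j : Fin k} (hj : ¬IsMin j) {t : ℝ} :
    minBeta β j ≤ t ↔ ∃ i < j, β i j ≤ t := by
  simpa using (lt_minBeta_iff hj).not

end MinBeta

namespace IsUltrametricMatrix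

variable {k : ℕ} {B : Fin k → Fin k → ℝ} {u v : Fin k} {a t : ℝ}

/-- At level `t`, `j` is the first element of its class before the classes of `u` and `v` are
merged, but not afterwards. -/
theorem of_mem_Ico_minBeta_lowerEntry (hB : IsUltrametricMatrix B) {j : Fin k}
    (ht : t ∈ Set.Ico (minBeta (lowerEntry B u v a) j) (minBeta B j)) :
    (∀ i < j, t < B i j) ∧ t ∈ Set.Ico a (B u v) ∧
      ((B v j ≤ t ∧ ∃ i < j, B i u ≤ t) ∨ (B u j ≤ t ∧ ∃ i < j, B i v ≤ t)) := by
  obtain ⟨hlow, hhigh⟩ := ht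
  have hj : ¬IsMin j := fun hj => by
    rw [minBeta_of_isMin _ hj] at hlow hhigh
    exact hhigh.not_ge hlow
  rw [lt_minBeta_iff hj] at hhigh
  obtain ⟨i, hij, hle⟩ := (minBeta_le_iff hj).1 hlow
  have hnot : ¬B i j ≤ t := (hhigh i hij).not_ge
  rcases lowerEntry_le_iff.1 hle with hBij | ⟨hat, ⟨hiu, hvj⟩ | ⟨hiv, huj⟩⟩
  · exact absurd hBij hnot
  · have huv : t < B u v := not_le.1 fun huv => hnot (hB.le_trans hiu (hB.le_trans huv hvj))
    exact ⟨hhigh, ⟨hat, huv⟩, .inl ⟨hvj, i, hij, hiu⟩⟩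
  · have huv : t < B u v := not_le.1 fun huv =>
      hnot (hB.le_trans hiv (hB.le_trans (hB.le_comm.1 huv) huj))
    exact ⟨hhigh, ⟨hat, huv⟩, .inr ⟨huj, i, hij, hiv⟩⟩

theorem pairwise_disjoint_Ico_minBeta_lowerEntry (hB : IsUltrametricMatrix B) (u v : Fin k)
    (a : ℝ) :
    Pairwise (Function.onFun Disjoint fun j =>
      Set.Ico (minBeta (lowerEntry B u v a) j) (minBeta B j)) := by
  refine (pairwise_disjoint_on _).2 fun j j' hjj' => Set.disjoint_left.2 fun t ht ht' => ?_
  obtain ⟨-, -, hj⟩ := hB.of_mem_Ico_minBeta_lowerEntry ht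
  obtain ⟨hfirst, -, hj'⟩ := hB.of_mem_Ico_minBeta_lowerEntry ht'
  have hnot : ∀ x i, i ≤ j → B i x ≤ t → ¬B x j' ≤ t := fun x i hij hix hxj' =>
    (hfirst i (hij.trans_lt hjj')).not_ge (hB.le_trans hix hxj')
  rcases hj with ⟨hvj, i, hij, hiu⟩ | ⟨huj, i, hij, hiv⟩ <;>
    rcases hj' with ⟨hvj', -⟩ | ⟨huj', -⟩
  · exact hnot v j le_rfl (hB.le_comm.1 hvj) hvj'
  · exact hnot u i hij.le hiu huj'
  · exact hnot v i hij.le hiv hvj'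
  · exact hnot u j le_rfl (hB.le_comm.1 huj) huj'

theorem sum_minBeta_sub_lowerEntry_le (hB : IsUltrametricMatrix B) (hab : a ≤ B u v) :
    ∑ j, (minBeta B j - minBeta (lowerEntry B u v a) j) ≤ B u v - a :=
  sum_sub_le_of_pairwiseDisjoint_Ico hab
    ((hB.pairwise_disjoint_Ico_minBeta_lowerEntry u v a).set_pairwise _)
    fun _ _ _ ht => (hB.of_mem_Ico_minBeta_lowerEntry ht).2.1

theorem bsym_eq (hB : IsUltrametricMatrix B) : bsym B = B := by
  ext i j
  simp only [bsym, hB.symm j i, ite_self]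

end IsUltrametricMatrix

section SymmExtend

variable {k : ℕ} {β : Fin k → Fin k → ℝ} {i j : Fin k}

/-- The symmetric matrix with the entries `β i j` for `i < j`, and with `c` on the diagonal. With
the least admissible value `c = -1/d` it turns a feasible `β` into an ultrametric matrix. -/
def symmExtend (c : ℝ) (β : Fin k → Fin k → ℝ) (i j : Fin k) : ℝ :=
  if i = j then c else bsym β i j

theorem symmExtend_self (c : ℝ) (β : Fin k → Fin k → ℝ) (i : Fin k) : symmExtend c β i i = c :=
  if_pos rfl

theorem symmExtend_of_ne (c : ℝ) (h : i ≠ j) : symmExtend c β i j = bsym β i j :=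
  if_neg h

theorem symmExtend_of_lt (c : ℝ) (h : i < j) : symmExtend c β i j = β i j := by
  rw [symmExtend_of_ne c h.ne, bsym, if_pos h]

theorem symmExtend_comm (c : ℝ) (β : Fin k → Fin k → ℝ) (i j : Fin k) :
    symmExtend c β i j = symmExtend c β j i := by
  rcases lt_trichotomy i j with h | rfl | h
  · simp [symmExtend, bsym, h, h.ne, h.ne', h.not_gt]
  · rfl
  · simp [symmExtend, bsym, h, h.ne, h.ne', h.not_gt]

end SymmExtend

namespace Feasible

variable {τ : ℝ} {d k : ℕ} {α : Fin k → ℝ} {β : Fin k → Fin k → ℝ}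

theorem le_symmExtend (hF : Feasible τ d α β) (i j : Fin k) :
    -(1 / (d : ℝ)) ≤ symmExtend (-(1 / (d : ℝ))) β i j := by
  rcases lt_trichotomy i j with h | rfl | h
  · exact symmExtend_of_lt _ h ▸ (hF.2.1 i j h).1
  · exact (symmExtend_self _ _ _).ge
  · exact symmExtend_comm _ _ i j ▸ symmExtend_of_lt _ h ▸ (hF.2.1 j i h).1

theorem isUltrametricMatrix_symmExtend (hF : Feasible τ d α β) :
    IsUltrametricMatrix (symmExtend (-(1 / (d : ℝ))) β) where
  symm := symmExtend_comm _ β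
  le_max i s j := by
    wlog hij : i ≤ j generalizing i j
    · rw [symmExtend_comm _ _ i j, symmExtend_comm _ _ i s, symmExtend_comm _ _ s j, max_comm]
      exact this j i (le_of_not_ge hij)
    rcases eq_or_ne s i with rfl | hsi
    · exact le_max_right _ _
    rcases eq_or_ne s j with rfl | hsj
    · exact le_max_left _ _
    rcases hij.eq_or_lt with rfl | hij
    · rw [symmExtend_self]
      exact le_max_of_le_left (hF.le_symmExtend i s)
    · rw [symmExtend_of_lt _ hij, symmExtend_of_ne _ hsi.symm, symmExtend_comm _ _ s j,
        symmExtend_of_ne _ hsj.symm]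
      exact hF.2.2 i j s hij hsi hsj

theorem of_isUltrametricMatrix {B : Fin k → Fin k → ℝ}
    (hα : ∀ i, α i ∈ Set.Icc (0 : ℝ) (1 / (τ - 1)))
    (hmem : ∀ i j, i < j → B i j ∈ Set.Icc (-(1 / (d : ℝ))) 0) (hB : IsUltrametricMatrix B) :
    Feasible τ d α B := by
  refine ⟨hα, hmem, fun i j s _ _ _ => ?_⟩
  rw [hB.bsym_eq, hB.symm j s]
  exact hB.le_max i s j

theorem exists_lowered_at (hF : Feasible τ d α β) {u v : Fin k} (huv : u < v) {a : ℝ}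
    (hda : -(1 / (d : ℝ)) ≤ a) (ha : a ≤ β u v) :
    ∃ β', Feasible τ d α β' ∧ (∀ i j, i < j → β' i j ≤ β i j) ∧ β' u v ≤ a ∧
      ∑ j, minBeta β j ≤ ∑ j, minBeta β' j + (β u v - a) := by
  set c : ℝ := -(1 / (d : ℝ))
  set B := symmExtend c β
  have hB : IsUltrametricMatrix B := hF.isUltrametricMatrix_symmExtend
  have hBβ : ∀ i j, i < j → B i j = β i j := fun i j hij => symmExtend_of_lt c hij
  have hle : ∀ i j, i < j → lowerEntry B u v a i j ≤ β i j := fun i j hij =>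
    (lowerEntry_le ..).trans_eq (hBβ i j hij)
  have hge : ∀ i j, c ≤ lowerEntry B u v a i j := fun i j =>
    le_min (hF.le_symmExtend i j) (le_max_of_le_left hda)
  have hdiag : ∀ i, B i i ≤ a := fun i => (symmExtend_self c β i).trans_le hda
  refine ⟨lowerEntry B u v a, ?_, hle, ?_, ?_⟩
  · exact of_isUltrametricMatrix hF.1
      (fun i j hij => ⟨hge i j, (hle i j hij).trans (hF.2.1 i j hij).2⟩) (hB.lowerEntry u v a)
  · exact lowerEntry_le_iff.2 <| .inr ⟨le_rfl, .inl ⟨hdiag u, hdiag v⟩⟩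
  · have hminBeta : ∀ j, minBeta B j = minBeta β j := fun j =>
      minBeta_congr (hBβ · j)
    have hsum := hB.sum_minBeta_sub_lowerEntry_le (ha.trans_eq (hBβ u v huv).symm)
    simp only [Finset.sum_sub_distrib, hminBeta, hBβ u v huv] at hsum
    linarith

theorem exists_constr_at (hF : Feasible τ d α β) (hd : 1 ≤ d) {u v : Fin k} (huv : u < v) :
    ∃ β', Feasible τ d α β' ∧ (∀ i j, i < j → β' i j ≤ β i j) ∧
      1 + (d : ℝ) * β' u v ≤ α u + α v ∧
      fLin τ d α β + min (α u + α v - d * β u v - 1) 0 ≤ fLin τ d α β' := by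
  have hd0 : (0 : ℝ) < d := by exact_mod_cast hd
  -- The minimum with `β u v` covers the case where the constraint already holds.
  set a : ℝ := min ((α u + α v - 1) / d) (β u v) with ha
  have hda : -(1 / (d : ℝ)) ≤ a := by
    refine le_min ?_ (hF.2.1 u v huv).1
    rw [← neg_div]
    gcongr
    linarith [(hF.1 u).1, (hF.1 v).1]
  have hmul : d * a = min (α u + α v - 1) (d * β u v) := by
    rw [ha, mul_min_of_nonneg _ _ hd0.le, mul_div_cancel₀ _ hd0.ne']
  obtain ⟨β', hF', hle, huv', hsum⟩ := hF.exists_lowered_at huv hda (min_le_right _ _)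
  refine ⟨β', hF', hle, ?_, ?_⟩
  · have hβ' : d * β' u v ≤ α u + α v - 1 :=
      (mul_le_mul_of_nonneg_left huv' hd0.le).trans (hmul.trans_le (min_le_left _ _))
    linarith
  · have hmin : min (α u + α v - d * β u v - 1) 0 = d * a - d * β u v := by
      rw [hmul, ← min_sub_sub_right, sub_self]
      congr 1
      ring
    have hsum' := mul_le_mul_of_nonneg_left hsum hd0.le
    rw [hmin, fLin, fLin]
    linarith

theorem exists_constr_on (hF : Feasible τ d α β) (hd : 1 ≤ d) (S : Finset (Fin k × Fin k))
    (hS : ∀ p ∈ S, p.1 < p.2) :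
    ∃ β', Feasible τ d α β' ∧ (∀ i j, i < j → β' i j ≤ β i j) ∧
      (∀ p ∈ S, 1 + (d : ℝ) * β' p.1 p.2 ≤ α p.1 + α p.2) ∧
      fLin τ d α β + ∑ p ∈ S, min (α p.1 + α p.2 - d * β p.1 p.2 - 1) 0 ≤ fLin τ d α β' := by
  induction S using Finset.induction_on with
  | empty => exact ⟨β, hF, fun _ _ _ => le_rfl, by simp, by simp⟩
  | insert e S he ih =>
    rw [Finset.forall_mem_insert] at hS
    obtain ⟨β₁, hF₁, hle₁, hS₁, hf₁⟩ := ih hS.2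
    obtain ⟨β₂, hF₂, hle₂, he₂, hf₂⟩ := hF₁.exists_constr_at hd hS.1
    have hmono {β β' : Fin k → Fin k → ℝ} (h : ∀ i j, i < j → β' i j ≤ β i j) {p : Fin k × Fin k}
        (hp : p.1 < p.2) : d * β' p.1 p.2 ≤ d * β p.1 p.2 :=
      mul_le_mul_of_nonneg_left (h _ _ hp) d.cast_nonneg
    refine ⟨β₂, hF₂, fun i j hij => (hle₂ i j hij).trans (hle₁ i j hij), ?_, ?_⟩
    · rw [Finset.forall_mem_insert]
      exact ⟨he₂, fun p hp => by linarith [hS₁ p hp, hmono hle₂ (hS.2 p hp)]⟩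
    · have he₁ : min (α e.1 + α e.2 - d * β e.1 e.2 - 1) 0 ≤
          min (α e.1 + α e.2 - d * β₁ e.1 e.2 - 1) 0 :=
        min_le_min_right 0 (by linarith [hmono hle₁ hS.1])
      rw [Finset.sum_insert he]
      linarith

end Feasible

section EdgePenalty

variable {k : ℕ}

open scoped Classical in
/-- The penalty term `∑_{(i,j) ∈ E_H} min(α_i + α_j - d β_{ij} - 1, 0)` of `f_H`, without its
factor `γ`. -/
def edgePenalty (d : ℕ) (H : SimpleGraph (Fin k)) (α : Fin k → ℝ) (β : Fin k → Fin k → ℝ) : ℝ :=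
  ∑ p ∈ Finset.univ.filter (fun p : Fin k × Fin k => p.1 < p.2 ∧ H.Adj p.1 p.2),
    min (α p.1 + α p.2 - (d : ℝ) * β p.1 p.2 - 1) 0

theorem fExp_eq_fLin_add_mul_edgePenalty (τ γ : ℝ) (d : ℕ) (H : SimpleGraph (Fin k))
    (α : Fin k → ℝ) (β : Fin k → Fin k → ℝ) :
    fExp τ γ d H α β = fLin τ d α β + γ * edgePenalty d H α β :=
  rfl

theorem edgePenalty_nonpos (d : ℕ) (H : SimpleGraph (Fin k)) (α : Fin k → ℝ)
    (β : Fin k → Fin k → ℝ) : edgePenalty d H α β ≤ 0 :=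
  Finset.sum_nonpos fun _ _ => min_le_right _ _

theorem edgePenalty_eq_zero_iff {d : ℕ} {H : SimpleGraph (Fin k)} {α : Fin k → ℝ}
    {β : Fin k → Fin k → ℝ} : edgePenalty d H α β = 0 ↔ EdgeConstr d H α β := by
  rw [edgePenalty, Finset.sum_eq_zero_iff_of_nonpos fun _ _ => min_le_right _ _]
  have hiff : ∀ i j, 0 ≤ α i + α j - d * β i j - 1 ↔ 1 + d * β i j ≤ α i + α j := fun i j => by
    constructor <;> intro h <;> linarith
  simp only [Finset.mem_filter, Finset.mem_univ, true_and, Prod.forall, min_eq_right_iff, and_imp,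
    hiff, EdgeConstr]

theorem Feasible.exists_edgeConstr {τ : ℝ} {d : ℕ} {α : Fin k → ℝ} {β : Fin k → Fin k → ℝ}
    (hF : Feasible τ d α β) (hd : 1 ≤ d) (H : SimpleGraph (Fin k)) :
    ∃ β', Feasible τ d α β' ∧ EdgeConstr d H α β' ∧
      fLin τ d α β + edgePenalty d H α β ≤ fLin τ d α β' := by
  classical
  obtain ⟨β', hF', -, hS, hf⟩ := hF.exists_constr_on hd
    (Finset.univ.filter fun p : Fin k × Fin k => p.1 < p.2 ∧ H.Adj p.1 p.2)
    fun p hp => (Finset.mem_filter.1 hp).2.1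
  refine ⟨β', hF', fun i j hij hadj => hS (i, j) (by simp [hij, hadj]), ?_⟩
  exact hf

end EdgePenalty

theorem isOptimalSub_iff {τ γ : ℝ} {d k : ℕ} (hd : 1 ≤ d) (H : SimpleGraph (Fin k)) (hγ : 1 < γ)
    (α : Fin k → ℝ) (β : Fin k → Fin k → ℝ) :
    IsOptimalSub τ γ d H α β ↔
      Feasible τ d α β ∧ EdgeConstr d H α β ∧
        ∀ α' β', Feasible τ d α' β' → EdgeConstr d H α' β' → fLin τ d α' β' ≤ fLin τ d α β := by
  have hpenalty := isMaxOn_add_mul_penalty_iff (s := {x | Feasible τ d x.1 x.2})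
    (f := fun x => fLin τ d x.1 x.2) (p := fun x => edgePenalty d H x.1 x.2) hγ
    (fun x _ => edgePenalty_nonpos d H x.1 x.2)
    (fun x hx => by
      obtain ⟨β', hF', hE', hle⟩ := Feasible.exists_edgeConstr hx hd H
      exact ⟨(x.1, β'), hF', edgePenalty_eq_zero_iff.2 hE', hle⟩)
    (x := (α, β))
  simpa only [IsOptimalSub, isMaxOn_iff, Prod.forall, Set.mem_ofPred_eq,
    edgePenalty_eq_zero_iff, and_imp, ← fExp_eq_fLin_add_mul_edgePenalty] using hpenalty

theorem optproblem_gamma_independent_general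
    (τ : ℝ) (d : ℕ) (hd : 1 ≤ d) {k : ℕ} (H : SimpleGraph (Fin k)) (γ : ℝ) (hγ : 1 < γ)
    (α : Fin k → ℝ) (β : Fin k → Fin k → ℝ) :
    (IsOptimalSub τ γ d H α β ↔
      Feasible τ d α β ∧ EdgeConstr d H α β ∧
        ∀ α' β', Feasible τ d α' β' → EdgeConstr d H α' β' →
          fLin τ d α' β' ≤ fLin τ d α β) ∧
    (∀ γ' : ℝ, 1 < γ' → (IsOptimalSub τ γ d H α β ↔ IsOptimalSub τ γ' d H α β)) :=
  ⟨isOptimalSub_iff hd H hγ α β, fun _ hγ' =>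
    (isOptimalSub_iff hd H hγ α β).trans (isOptimalSub_iff hd H hγ' α β).symm⟩

/-- `(α*,β*)` maximizes `f_H` over `F` iff it maximizes the linear
objective `f` over the feasible points satisfying `α_i + α_j ≥ 1 + d β_{ij}` on all
edges; in particular the set of optimizers does not depend on `γ ∈ (1,∞)`. -/
theorem optproblem_gamma_independent
    (τ : ℝ) (hτ : τ ∈ Set.Ioo (2:ℝ) 3) (d : ℕ) (hd : 1 ≤ d)
    {k : ℕ} (H : SimpleGraph (Fin k)) (γ : ℝ) (hγ : 1 < γ)
    (α : Fin k → ℝ) (β : Fin k → Fin k → ℝ) :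
    (IsOptimalSub τ γ d H α β ↔
      Feasible τ d α β ∧ EdgeConstr d H α β ∧
        ∀ α' β', Feasible τ d α' β' → EdgeConstr d H α' β' →
          fLin τ d α' β' ≤ fLin τ d α β) ∧
    (∀ γ' : ℝ, 1 < γ' → (IsOptimalSub τ γ d H α β ↔ IsOptimalSub τ γ' d H α β)) := by
  exact optproblem_gamma_independent_general τ d hd H γ hγ α β

end
end

section
/- Let H be a graph on [k], let ⋆ ∈ {ind, sub}, and suppose the corresponding optimization problem has a unique optimal solution (α*,β*), which is either (α*,β*) ≡ (1/2, 0) or (α*,β*) ≡ (0, −1/d). Then for every (α,β) ∈ F with (α,β) ≠ (α*,β*) and every fixed ε ∈ (0,1), the ratio N^⋆(H; M_ε^{(α,β)}) / N^⋆(H; M_ε^{(α*,β*)}) converges to 0 in probability as n → ∞. -/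
open MeasureTheory Filter Finset

noncomputable section

/-!
Multiplying the probabilities of the weight windows, the volumes of the balls joining each vertex to
an earlier one at the smallest prescribed distance, and the coin probabilities of the edges gives
`E N(H; M_ε^{(α,β)}) ≤ C n ^ f_H(α,β)`; by Markov's inequality the numerator is at most this order.
At `(α*,β*)` one has `d β = 2 α - 1`, so all the ratios `w_u w_v / (n μ ‖x_u - x_v‖ ^ d)` are of
order one. Copies of `H` near one fixed template (weights in a window, positions close to a scaled
translate of the template, coins in fixed sets of positive measure) are counted with certainty, and
Chebyshev's inequality shows that there are at least `c n ^ f_H(α*,β*)` of them: tuples with common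
vertices contribute a vanishing fraction of the second moment. The template is read off an outcome
with a nonzero count; if there is no such outcome for large `n`, then the ratio has a zero
denominator and equals `0`. If the optimization is the induced one and `(α,β)` violates its
constraint, a nonedge of `H` is forced to be an edge and the numerator vanishes. Otherwise
`f_H(α,β) < f_H(α*,β*)` by unique optimality.
-/

open ProbabilityTheory
open scoped ENNReal Topology

section ProductMeasure

variable {κ : Type*} [DecidableEq κ] {X : κ → Type*} [∀ a, MeasurableSpace (X a)]
  (μ : ∀ a, Measure (X a)) [∀ a, IsProbabilityMeasure (μ a)]

theorem measurable_lintegral_update (a : κ) {f : (∀ b, X b) → ℝ≥0∞} (hf : Measurable f) :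
    Measurable fun x => ∫⁻ z, f (Function.update x a z) ∂μ a :=
  Measurable.lintegral_prod_right' (f := fun p : (∀ b, X b) × X a => f (Function.update p.1 a p.2))
    (hf.comp measurable_update')

variable [Fintype κ]

theorem lintegral_pi_eq_lintegral_update (a : κ) {f : (∀ b, X b) → ℝ≥0∞} (hf : Measurable f) :
    ∫⁻ x, f x ∂Measure.pi μ = ∫⁻ x, ∫⁻ z, f (Function.update x a z) ∂μ a ∂Measure.pi μ := by
  have x₀ : ∀ b, X b := fun b => (μ b).nonempty_of_neZero.some
  rw [lintegral_eq_lmarginal_univ x₀, lintegral_eq_lmarginal_univ x₀,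
    lmarginal_erase' f hf (mem_univ a),
    lmarginal_erase' _ (measurable_lintegral_update μ a hf) (mem_univ a)]
  simp

theorem pi_apply_eq_lintegral_update (a : κ) {S : Set (∀ b, X b)} (hS : MeasurableSet S) :
    Measure.pi μ S = ∫⁻ x, μ a {z | Function.update x a z ∈ S} ∂Measure.pi μ := by
  rw [← lintegral_indicator_one hS,
    lintegral_pi_eq_lintegral_update μ a (measurable_one.indicator hS)]
  exact lintegral_congr fun x => lintegral_indicator_one (measurable_update x hS)

theorem pi_inter_of_update_invariant (a : κ) {S K : Set (∀ b, X b)} (hS : MeasurableSet S)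
    (hK : MeasurableSet K) (hinv : ∀ x z, Function.update x a z ∈ S ↔ x ∈ S) {c : ℝ≥0∞}
    (hc : ∀ x, μ a {z | Function.update x a z ∈ K} = c) :
    Measure.pi μ (S ∩ K) = Measure.pi μ S * c := by
  have hfibre (x) : μ a {z | Function.update x a z ∈ S ∩ K} = S.indicator (fun _ => c) x := by
    by_cases hx : x ∈ S <;> simp [hinv, hx, hc]
  rw [pi_apply_eq_lintegral_update μ a (hS.inter hK), lintegral_congr hfibre,
    lintegral_indicator_const hS, mul_comm]

theorem pi_forall_mem_eq_prod_of_triangular {ι L : Type*} [LinearOrder L]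
    (e : ι → κ) (rank : ι → L) {K : ι → Set (∀ b, X b)} (hK : ∀ i, MeasurableSet (K i))
    (c : ι → ℝ≥0∞) (J : Finset ι)
    (hinv : ∀ i ∈ J, ∀ j ∈ J, i ≠ j → rank i ≤ rank j →
      ∀ x z, Function.update x (e j) z ∈ K i ↔ x ∈ K i)
    (hc : ∀ j ∈ J, ∀ x, μ (e j) {z | Function.update x (e j) z ∈ K j} = c j) :
    Measure.pi μ {x | ∀ j ∈ J, x ∈ K j} = ∏ j ∈ J, c j := by
  classical
  induction J using Finset.induction_on_max_value rank with
  | empty => simp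
  | insert a s has hmax ih =>
    have hs : MeasurableSet {x : ∀ b, X b | ∀ j ∈ s, x ∈ K j} := by
      simpa only [Set.ofPred_forall, Set.ofPred_mem_eq] using
        s.measurableSet_biInter fun j _ => hK j
    have hsplit : {x : ∀ b, X b | ∀ j ∈ insert a s, x ∈ K j} =
        {x | ∀ j ∈ s, x ∈ K j} ∩ K a := by
      ext x
      simp [and_comm]
    rw [hsplit, pi_inter_of_update_invariant μ (e a) hs (hK a) _ (hc a (mem_insert_self a s)),
      ih (fun i hi j hj => hinv i (mem_insert_of_mem hi) j (mem_insert_of_mem hj))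
        (fun j hj => hc j (mem_insert_of_mem hj)),
      prod_insert has, mul_comm]
    exact fun x z => forall₂_congr fun j hj => hinv j (mem_insert_of_mem hj) a
      (mem_insert_self a s) (ne_of_mem_of_not_mem hj has) (hmax j hj) x z

theorem pi_forall_mem_eq_prod {κ X : Type*} [Fintype κ] [MeasurableSpace X] (μ : Measure X)
    [IsProbabilityMeasure μ] {ι : Type*} {e : ι → κ} {B : ι → Set X}
    (hB : ∀ i, MeasurableSet (B i)) {J : Finset ι} (he : Set.InjOn e J) :
    Measure.pi (fun _ => μ) {x | ∀ j ∈ J, x (e j) ∈ B j} = ∏ j ∈ J, μ (B j) := by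
  classical
  refine pi_forall_mem_eq_prod_of_triangular (fun _ => μ) e (fun _ => 0)
    (K := fun j => {x | x (e j) ∈ B j}) (fun j => measurable_pi_apply (e j) (hB j)) _ _ ?_ ?_
  · intro i hi j hj hij _ x z
    simp [Function.update_of_ne (he.ne hi hj hij)]
  · simp

end ProductMeasure

section Counting

variable {Ω T : Type*} [MeasurableSpace Ω]

theorem ncard_eq_sum_indicator {R : Type*} [Fintype T] [NonAssocSemiring R] (S : Set T) :
    (S.ncard : R) = ∑ v, S.indicator 1 v := by
  classical
  rw [Set.ncard_eq_toFinset_card', ← Set.coe_toFinset S]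
  simp [Set.indicator_apply]

theorem measure_le_ncard_le_of_subset (P : Measure Ω) [Fintype T] {S : Ω → Set T}
    {B : T → Set Ω} (hSB : ∀ ω, ∀ v ∈ S ω, ω ∈ B v) {θ : ℝ} (hθ : 0 < θ) :
    P {ω | θ ≤ (S ω).ncard} ≤ (∑ v, P (B v)) / ENNReal.ofReal θ := by
  let f (ω : Ω) : ℝ≥0∞ := ∑ v, (toMeasurable P (B v)).indicator 1 ω
  have hind (v : T) : Measurable ((toMeasurable P (B v)).indicator (1 : Ω → ℝ≥0∞)) :=
    measurable_one.indicator (measurableSet_toMeasurable _ _)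
  have hle (ω : Ω) : ((S ω).ncard : ℝ≥0∞) ≤ f ω := by
    rw [ncard_eq_sum_indicator]
    refine sum_le_sum fun v _ => ?_
    by_cases hv : v ∈ S ω
    · simp [hv, subset_toMeasurable P (B v) (hSB ω v hv)]
    · simp [hv]
  have hf : ∫⁻ ω, f ω ∂P = ∑ v, P (B v) := by
    rw [lintegral_finsetSum _ fun v _ => hind v]
    simp
  rw [← hf]
  refine (measure_mono fun ω hω => ?_).trans (meas_ge_le_lintegral_div
    (Finset.measurable_fun_sum _ fun v _ => hind v).aemeasurable (by simpa using hθ)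
    ENNReal.ofReal_ne_top)
  exact (ENNReal.ofReal_le_ofReal hω).trans (by simpa using hle ω)

theorem memLp_indicator_one (P : Measure Ω) [IsFiniteMeasure P] (p : ℝ≥0∞) {A : Set Ω}
    (hA : MeasurableSet A) : MemLp (A.indicator (1 : Ω → ℝ)) p P :=
  memLp_indicator_const p hA 1 (Or.inr (measure_ne_top P A))

theorem covariance_indicator_one (P : Measure Ω) [IsProbabilityMeasure P] {A B : Set Ω}
    (hA : MeasurableSet A) (hB : MeasurableSet B) :
    cov[A.indicator (1 : Ω → ℝ), B.indicator (1 : Ω → ℝ); P] =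
      P.real (A ∩ B) - P.real A * P.real B := by
  rw [covariance_eq_sub (memLp_indicator_one P 2 hA) (memLp_indicator_one P 2 hB),
    ← Set.inter_indicator_one, integral_indicator_one (hA.inter hB), integral_indicator_one hA,
    integral_indicator_one hB]

theorem variance_sum_indicator_le (P : Measure Ω) [IsProbabilityMeasure P] (I : Finset T)
    {A : T → Set Ω} (hA : ∀ v, MeasurableSet (A v)) (R : T → T → Prop) [DecidableRel R]
    (hR : ∀ v ∈ I, ∀ v' ∈ I, ¬R v v' → P.real (A v ∩ A v') = P.real (A v) * P.real (A v')) :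
    Var[fun ω => ∑ v ∈ I, (A v).indicator (1 : Ω → ℝ) ω; P] ≤
      ∑ v ∈ I, ∑ v' ∈ I, if R v v' then P.real (A v ∩ A v') else 0 := by
  rw [variance_fun_sum' fun v _ => memLp_indicator_one P 2 (hA v)]
  refine sum_le_sum fun v hv => sum_le_sum fun v' hv' => ?_
  rw [covariance_indicator_one P (hA v) (hA v')]
  split_ifs with h
  · exact sub_le_self _ (by positivity)
  · exact (sub_eq_zero.2 (hR v hv v' hv' h)).le

theorem measure_sum_indicator_lt_half_le (P : Measure Ω) [IsProbabilityMeasure P] (I : Finset T)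
    {A : T → Set Ω} (hA : ∀ v, MeasurableSet (A v)) (R : T → T → Prop) [DecidableRel R]
    (hR : ∀ v ∈ I, ∀ v' ∈ I, ¬R v v' → P.real (A v ∩ A v') = P.real (A v) * P.real (A v'))
    {m : ℝ} (hm : ∑ v ∈ I, P.real (A v) = m) (hm0 : 0 < m) :
    P {ω | ∑ v ∈ I, (A v).indicator (1 : Ω → ℝ) ω < m / 2} ≤
      ENNReal.ofReal
        ((∑ v ∈ I, ∑ v' ∈ I, if R v v' then P.real (A v ∩ A v') else 0) / (m / 2) ^ 2) := by
  have hL2 : MemLp (fun ω => ∑ v ∈ I, (A v).indicator (1 : Ω → ℝ) ω) 2 P :=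
    memLp_finsetSum _ fun v _ => memLp_indicator_one P 2 (hA v)
  have hmean : ∫ ω, ∑ v ∈ I, (A v).indicator (1 : Ω → ℝ) ω ∂P = m := by
    rw [integral_finsetSum _ fun v _ => (integrable_const 1).indicator (hA v), ← hm]
    exact sum_congr rfl fun v _ => integral_indicator_one (hA v)
  have hcheb := meas_ge_le_variance_div_sq hL2 (half_pos hm0)
  rw [hmean] at hcheb
  refine (measure_mono fun ω hω => ?_).trans (hcheb.trans (ENNReal.ofReal_le_ofReal
    (div_le_div_of_nonneg_right (variance_sum_indicator_le P I hA R hR) (by positivity))))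
  rw [Set.mem_ofPred_eq] at hω ⊢
  rw [le_abs]
  exact Or.inr (by linarith)

theorem eventually_half_pow_le_card_injective (k : ℕ) : ∀ᶠ n : ℕ in atTop,
    (n : ℝ) ^ k / 2 ≤ #{v : Fin k → Fin n | Function.Injective v} := by
  have hratio : Tendsto (fun n : ℕ => (n.descFactorial k : ℝ) / (n : ℝ) ^ k) atTop (𝓝 1) :=
    (Asymptotics.isEquivalent_iff_tendsto_one ((eventually_gt_atTop 0).mono fun n hn => by
      positivity)).1 (isEquivalent_descFactorial k)
  filter_upwards [hratio.eventually_const_le one_half_lt_one, eventually_gt_atTop 0] with n hn hn0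
  have hcard : #{v : Fin k → Fin n | Function.Injective v} = n.descFactorial k := by
    rw [← Fintype.card_subtype,
      Fintype.card_congr (Equiv.subtypeInjectiveEquivEmbedding (Fin k) (Fin n)),
      Fintype.card_embedding_eq, Fintype.card_fin, Fintype.card_fin]
  rw [hcard]
  have : (0 : ℝ) < (n : ℝ) ^ k := by positivity
  rw [le_div_iff₀ this] at hn
  linarith

end Counting

section TorusVolume

instance : IsProbabilityMeasure (volume : Measure (AddCircle (1 : ℝ))) :=
  ⟨UnitAddCircle.measure_univ⟩

variable {d : ℕ} (x : Torus d) {r : ℝ}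

theorem volume_torus_closedBall (hr : 0 ≤ r) :
    volume (Metric.closedBall x r) = ENNReal.ofReal (min 1 (2 * r) ^ d) := by
  simp [volume_pi, Measure.pi_closedBall _ _ hr, AddCircle.volume_closedBall,
    ENNReal.ofReal_pow (show 0 ≤ min 1 (2 * r) by positivity)]

theorem volume_torus_sphere (hr : 0 < r) : volume (Metric.sphere x r) = 0 := by
  have hball : volume (Metric.ball x r) = volume (Metric.closedBall x r) := by
    rw [volume_pi, Measure.pi_ball _ _ hr, Measure.pi_closedBall _ _ hr.le]
    exact prod_congr rfl fun i _ => (measure_congr AddCircle.closedBall_ae_eq_ball).symm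
  rw [← Metric.closedBall_sdiff_ball, measure_sdiff Metric.ball_subset_closedBall
    measurableSet_ball.nullMeasurableSet (measure_ne_top _ _), hball, tsub_self]

theorem ae_dist_ne {κ : Type*} [Fintype κ] (hr : 0 < r) :
    ∀ᵐ x : κ → Torus d, ∀ u v, u ≠ v → dist (x u) (x v) ≠ r := by
  classical
  simp only [ae_all_iff]
  intro u v huv
  have hmeas : MeasurableSet {x : κ → Torus d | dist (x u) (x v) = r} :=
    (isClosed_eq (by fun_prop) continuous_const).measurableSet
  have hfibre (x : κ → Torus d) :
      volume {z | Function.update x u z ∈ {x : κ → Torus d | dist (x u) (x v) = r}} = 0 := by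
    simpa [Function.update_of_ne huv.symm, Metric.sphere] using volume_torus_sphere (x v) hr
  rw [ae_iff]
  simp only [ne_eq, not_not]
  rw [volume_pi, pi_apply_eq_lintegral_update _ u hmeas, lintegral_congr hfibre, lintegral_zero]

end TorusVolume

section Law

/-- The law of a single edge coin, uniform on `[0, 1]`. -/
def coinLaw : Measure ℝ := volume.restrict (Set.Icc 0 1)

instance : IsProbabilityMeasure coinLaw := ⟨by simp [coinLaw]⟩

theorem coinLaw_Iic (p : ℝ) : coinLaw (Set.Iic p) = ENNReal.ofReal (min p 1) := by
  rw [coinLaw, Measure.restrict_apply measurableSet_Iic, ← Set.Ici_inter_Iic, Set.inter_left_comm,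
    Set.Iic_inter_Iic, Set.Ici_inter_Iic]
  simp

theorem coinLaw_Ioi_pos {p : ℝ} (hp : 0 ≤ p) (hp1 : p < 1) : 0 < coinLaw (Set.Ioi p) := by
  have hsub : Set.Ioc p 1 ⊆ Set.Ioi p ∩ Set.Icc 0 1 := fun x hx => ⟨hx.1, hp.trans hx.1.le, hx.2⟩
  rw [coinLaw, Measure.restrict_apply measurableSet_Ioi]
  exact (by simpa using hp1 : 0 < volume (Set.Ioc p 1)).trans_le (measure_mono hsub)

variable (μW : Measure ℝ) (d n : ℕ)

theorem girgMeasure_eq_prod : girgMeasure μW d n =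
    (Measure.pi fun _ : Fin n => μW).prod
      ((Measure.pi fun _ : Fin n => (volume : Measure (Torus d))).prod
        (Measure.pi fun _ : Sym2 (Fin n) => coinLaw)) := rfl

theorem girgMeasure_prod (A : Set (Fin n → ℝ)) (B : Set (Fin n → Torus d))
    (C : Set (Sym2 (Fin n) → ℝ)) :
    girgMeasure μW d n (A ×ˢ B ×ˢ C) =
      Measure.pi (fun _ => μW) A * (Measure.pi (fun _ : Fin n => (volume : Measure (Torus d))) B *
        Measure.pi (fun _ => coinLaw) C) := by
  rw [girgMeasure_eq_prod, Measure.prod_prod, Measure.prod_prod]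

theorem ae_girgMeasure_position {p : (Fin n → Torus d) → Prop}
    (h : ∀ᵐ x : Fin n → Torus d, p x) : ∀ᵐ ω ∂girgMeasure μW d n, p ω.2.1 :=
  Measure.quasiMeasurePreserving_snd.ae (Measure.quasiMeasurePreserving_fst.ae h)

theorem ae_girgMeasure_coin_le_one : ∀ᵐ ω ∂girgMeasure μW d n, ∀ q, ω.2.2 q ≤ 1 := by
  have hcoin : ∀ᵐ t ∂coinLaw, t ≤ 1 := (ae_restrict_mem measurableSet_Icc).mono fun t ht => ht.2
  exact Measure.quasiMeasurePreserving_snd.ae (Measure.quasiMeasurePreserving_snd.ae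
    (p := fun g : Sym2 (Fin n) → ℝ => ∀ q, g q ≤ 1) (ae_all_iff.2 fun q =>
      (Measure.quasiMeasurePreserving_eval (fun _ => coinLaw) q).ae hcoin))

variable [IsProbabilityMeasure μW]

instance : IsProbabilityMeasure (girgMeasure μW d n) := by
  rw [girgMeasure_eq_prod]
  infer_instance

theorem ae_girgMeasure_weight {p : ℝ → Prop} (h : ∀ᵐ t ∂μW, p t) :
    ∀ᵐ ω ∂girgMeasure μW d n, ∀ u, p (ω.1 u) := by
  refine Measure.quasiMeasurePreserving_fst.ae (p := fun w : Fin n → ℝ => ∀ u, p (w u)) ?_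
  exact ae_all_iff.2 fun u => (Measure.quasiMeasurePreserving_eval (fun _ => μW) u).ae h

end Law

section Pattern

/-- A prescription for the weights, relative positions and coins of vertices indexed by `ι`. Each
index in `children` has its position pinned, up to `radius` and an `offset`, to the one of its
`parent`, and `depth` certifies that the parent relation is a forest. -/
structure GirgPattern (d : ℕ) (ι : Type*) where
  weight : ι → Set ℝ
  measurableSet_weight : ∀ i, MeasurableSet (weight i)
  children : Finset ι
  parent : ι → ι
  depth : ι → ℕ
  depth_parent_lt : ∀ j ∈ children, depth (parent j) < depth j
  offset : ι → Torus d
  radius : ι → ℝ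
  radius_nonneg : ∀ j, 0 ≤ radius j
  pairs : Finset (ι × ι)
  swap_notMem_pairs : ∀ p ∈ pairs, p.swap ∉ pairs
  coin : ι × ι → Set ℝ
  measurableSet_coin : ∀ p, MeasurableSet (coin p)

namespace GirgPattern

variable {d n : ℕ} {ι ι' : Type*}

/-- The event that the vertices `v` follow the pattern. -/
def event (P : GirgPattern d ι) (v : ι → Fin n) : Set (GirgΩ d n) :=
  {w | ∀ i, w (v i) ∈ P.weight i} ×ˢ
    {x | ∀ j ∈ P.children, dist (x (v j)) (x (v (P.parent j)) + P.offset j) ≤ P.radius j} ×ˢ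
      {g | ∀ p ∈ P.pairs, g s(v p.1, v p.2) ∈ P.coin p}

/-- The probability that distinct vertices follow the pattern. -/
def prob [Fintype ι] (P : GirgPattern d ι) (μW : Measure ℝ) : ℝ≥0∞ :=
  (∏ i, μW (P.weight i)) * ((∏ j ∈ P.children, ENNReal.ofReal (min 1 (2 * P.radius j) ^ d)) *
    ∏ p ∈ P.pairs, coinLaw (P.coin p))

theorem measurableSet_event [Countable ι] (P : GirgPattern d ι) (v : ι → Fin n) :
    MeasurableSet (P.event v) := by
  refine .prod ?_ (.prod ?_ ?_)
  · rw [Set.ofPred_forall]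
    exact .iInter fun i => measurable_pi_apply (v i) (P.measurableSet_weight i)
  · simp only [Set.ofPred_forall]
    exact .iInter fun j => .iInter fun _ =>
      (isClosed_le (by fun_prop) continuous_const).measurableSet
  · simp only [Set.ofPred_forall]
    exact .iInter fun p => .iInter fun _ => measurable_pi_apply _ (P.measurableSet_coin p)

theorem injOn_pairs (P : GirgPattern d ι) {v : ι → Fin n} (hv : Function.Injective v) :
    Set.InjOn (fun p : ι × ι => s(v p.1, v p.2)) P.pairs := by
  rintro ⟨a, b⟩ hab ⟨a', b'⟩ hab' h
  rcases Sym2.eq_iff.1 h with ⟨h₁, h₂⟩ | ⟨h₁, h₂⟩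
  · exact Prod.ext (hv h₁) (hv h₂)
  · obtain rfl : a = b' := hv h₁
    obtain rfl : b = a' := hv h₂
    exact absurd hab' (P.swap_notMem_pairs _ hab)

theorem pi_volume_positions (P : GirgPattern d ι) {v : ι → Fin n} (hv : Function.Injective v) :
    Measure.pi (fun _ : Fin n => (volume : Measure (Torus d)))
        {x | ∀ j ∈ P.children, dist (x (v j)) (x (v (P.parent j)) + P.offset j) ≤ P.radius j} =
      ∏ j ∈ P.children, ENNReal.ofReal (min 1 (2 * P.radius j) ^ d) := by
  refine pi_forall_mem_eq_prod_of_triangular (X := fun _ : Fin n => Torus d)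
    (fun _ : Fin n => (volume : Measure (Torus d))) v P.depth
    (K := fun j : ι => {x | dist (x (v j)) (x (v (P.parent j)) + P.offset j) ≤ P.radius j})
    (fun j => (isClosed_le (by fun_prop) continuous_const).measurableSet) _ _ ?_ ?_
  · intro i hi j _ hij hle x z
    have hparent : P.parent i ≠ j := fun h => (P.depth_parent_lt i hi).not_ge (h ▸ hle)
    simp [Function.update_of_ne (hv.ne hij), Function.update_of_ne (hv.ne hparent)]
  · intro j hj x
    have hparent : P.parent j ≠ j := fun h => (P.depth_parent_lt j hj).ne (by rw [h])
    simpa [Function.update_of_ne (hv.ne hparent), Metric.closedBall] using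
      volume_torus_closedBall (x (v (P.parent j)) + P.offset j) (P.radius_nonneg j)

theorem girgMeasure_event [Fintype ι] (P : GirgPattern d ι) (μW : Measure ℝ)
    [IsProbabilityMeasure μW] {v : ι → Fin n} (hv : Function.Injective v) :
    girgMeasure μW d n (P.event v) = P.prob μW := by
  have hweight := pi_forall_mem_eq_prod μW P.measurableSet_weight (J := univ) hv.injOn
  simp only [mem_univ, forall_const] at hweight
  rw [event, girgMeasure_prod, hweight, P.pi_volume_positions hv,
    pi_forall_mem_eq_prod coinLaw P.measurableSet_coin (P.injOn_pairs hv), prob]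

/-- The pattern asking for `P` and `P'` on disjoint sets of indices. -/
def disjSum (P : GirgPattern d ι) (P' : GirgPattern d ι') : GirgPattern d (ι ⊕ ι') where
  weight := Sum.elim P.weight P'.weight
  measurableSet_weight := Sum.rec P.measurableSet_weight P'.measurableSet_weight
  children := P.children.disjSum P'.children
  parent := Sum.map P.parent P'.parent
  depth := Sum.elim P.depth P'.depth
  depth_parent_lt := by
    rintro (j | j) hj
    · exact P.depth_parent_lt j (inl_mem_disjSum.1 hj)
    · exact P'.depth_parent_lt j (inr_mem_disjSum.1 hj)
  offset := Sum.elim P.offset P'.offset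
  radius := Sum.elim P.radius P'.radius
  radius_nonneg := Sum.rec P.radius_nonneg P'.radius_nonneg
  pairs := (P.pairs.map (.prodMap .inl .inl)).disjUnion (P'.pairs.map (.prodMap .inr .inr)) <| by
    simp [disjoint_left]
  swap_notMem_pairs := by
    rintro ⟨a | a, b | b⟩
    · simpa using P.swap_notMem_pairs (a, b)
    · simp
    · simp
    · simpa using P'.swap_notMem_pairs (a, b)
  coin
    | (.inl a, .inl b) => P.coin (a, b)
    | (.inr a, .inr b) => P'.coin (a, b)
    | _ => Set.univ
  measurableSet_coin := by
    rintro ⟨a | a, b | b⟩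
    · exact P.measurableSet_coin (a, b)
    · exact .univ
    · exact .univ
    · exact P'.measurableSet_coin (a, b)

theorem event_disjSum (P : GirgPattern d ι) (P' : GirgPattern d ι') (v : ι → Fin n)
    (v' : ι' → Fin n) : (P.disjSum P').event (Sum.elim v v') = P.event v ∩ P'.event v' := by
  ext ω
  simp only [event, disjSum, Set.mem_prod, Set.mem_ofPred_eq, Sum.forall, Sum.elim_inl,
    Sum.elim_inr, inl_mem_disjSum, inr_mem_disjSum, Sum.map_inl, Sum.map_inr, mem_disjUnion,
    Set.mem_inter_iff, or_imp, forall_and, forall_mem_map, Function.Embedding.coe_prodMap,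
    Prod.map_fst, Prod.map_snd, Function.Embedding.inl_apply, Function.Embedding.inr_apply]
  tauto

theorem prob_disjSum [Fintype ι] [Fintype ι'] (P : GirgPattern d ι) (P' : GirgPattern d ι')
    (μW : Measure ℝ) : (P.disjSum P').prob μW = P.prob μW * P'.prob μW := by
  simp only [prob, disjSum, Fintype.prod_sum_type, Sum.elim_inl, Sum.elim_inr, prod_disjSum,
    prod_disjUnion, prod_map, Function.Embedding.coe_prodMap, Prod.map,
    Function.Embedding.inl_apply, Function.Embedding.inr_apply]
  ring

theorem girgMeasure_event_inter [Finite ι] [Finite ι'] (P : GirgPattern d ι)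
    (P' : GirgPattern d ι') (μW : Measure ℝ) [IsProbabilityMeasure μW] {v : ι → Fin n}
    {v' : ι' → Fin n} (hv : Function.Injective v) (hv' : Function.Injective v')
    (hdisj : ∀ i j, v i ≠ v' j) :
    girgMeasure μW d n (P.event v ∩ P'.event v') =
      girgMeasure μW d n (P.event v) * girgMeasure μW d n (P'.event v') := by
  cases nonempty_fintype ι
  cases nonempty_fintype ι'
  rw [← event_disjSum, girgMeasure_event _ μW (hv.sumElim hv' hdisj), prob_disjSum,
    girgMeasure_event P μW hv, girgMeasure_event P' μW hv']

end GirgPattern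

end Pattern

section TorusDilation

variable {d : ℕ}

theorem exists_coe_eq_and_abs_eq_norm (y : AddCircle (1 : ℝ)) :
    ∃ t : ℝ, (t : AddCircle (1 : ℝ)) = y ∧ |t| = ‖y‖ := by
  obtain ⟨t, rfl⟩ := QuotientAddGroup.mk_surjective y
  have hround : ((round t : ℝ) : AddCircle (1 : ℝ)) = 0 :=
    (AddCircle.coe_eq_zero_iff 1).2 ⟨round t, by simp⟩
  exact ⟨t - round t, by rw [AddCircle.coe_sub, hround, sub_zero], UnitAddCircle.norm_eq.symm⟩

theorem dist_torus_coe {s t : Fin d → ℝ} (h : dist s t ≤ 1 / 2) :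
    dist (fun c => (s c : AddCircle (1 : ℝ))) (fun c => (t c : AddCircle (1 : ℝ))) = dist s t := by
  have hcoord (c : Fin d) : nndist (s c : AddCircle (1 : ℝ)) (t c) = nndist (s c) (t c) := by
    have hc : |s c - t c| ≤ 1 / 2 := (dist_le_pi_dist s t c).trans h
    refine NNReal.eq ?_
    rw [coe_nndist, coe_nndist, dist_eq_norm, ← AddCircle.coe_sub, Real.dist_eq]
    exact (AddCircle.norm_coe_eq_abs_iff _ one_ne_zero).2 (by simpa using hc)
  simp only [dist_pi_def, hcoord]

theorem exists_dilation_torus {κ : Type*} (x : κ → Torus d) (a : κ)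
    (h : ∀ i, dist (x i) (x a) ≤ 1 / 4) :
    ∃ z : ℝ → κ → Torus d, ∀ l ∈ Set.Icc (0 : ℝ) 1, ∀ i j,
      dist (z l i) (z l j) = l * dist (x i) (x j) := by
  choose T hT hTnorm using fun i c => exists_coe_eq_and_abs_eq_norm (x i c - x a c)
  have hT0 (i : κ) : dist (T i) 0 ≤ 1 / 4 := by
    refine (dist_pi_le_iff (by norm_num)).2 fun c => ?_
    rw [Pi.zero_apply, dist_zero_right, Real.norm_eq_abs, hTnorm, ← dist_eq_norm]
    exact (dist_le_pi_dist (x i) (x a) c).trans (h i)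
  have hTdist (i j : κ) : dist (T i) (T j) ≤ 1 / 2 :=
    (dist_triangle_right _ _ 0).trans (by linarith [hT0 i, hT0 j])
  have hx (i j : κ) : dist (x i) (x j) = dist (T i) (T j) := by
    rw [← dist_torus_coe (hTdist i j), ← dist_sub_right (x i) (x j) (x a)]
    simp only [hT]
    rfl
  refine ⟨fun l i c => ((l • T i) c : ℝ), fun l hl i j => ?_⟩
  have hscale : dist (l • T i) (l • T j) = l * dist (T i) (T j) := by
    rw [dist_smul₀, Real.norm_of_nonneg hl.1]
  rw [hx, ← hscale]
  refine dist_torus_coe ?_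
  rw [hscale]
  exact (mul_le_of_le_one_left dist_nonneg hl.2).trans (hTdist i j)

end TorusDilation

section Overlap

variable {ι κ : Type*} [Fintype ι] [DecidableEq κ]

/-- The indices at which the tuple `v'` leaves the range of the tuple `v`. -/
def freshIndices (v v' : ι → κ) : Finset ι := {j | ∀ i, v i ≠ v' j}

theorem mem_freshIndices {v v' : ι → κ} {j : ι} : j ∈ freshIndices v v' ↔ ∀ i, v i ≠ v' j := by
  simp [freshIndices]

variable [DecidableEq ι] [Fintype κ]

theorem card_filter_freshIndices_eq_le (v : ι → κ) (S : Finset ι) :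
    #{v' : ι → κ | freshIndices v v' = S} ≤
      Fintype.card κ ^ #S * Fintype.card ι ^ (Fintype.card ι - #S) := by
  have hsub : ({v' : ι → κ | freshIndices v v' = S} : Finset _) ⊆
      Fintype.piFinset fun j => if j ∈ S then univ else univ.image v := by
    intro v' hv'
    obtain rfl := (mem_filter.1 hv').2
    refine Fintype.mem_piFinset.2 fun j => ?_
    split_ifs with hj
    · exact mem_univ _
    · simpa [mem_freshIndices] using hj
  calc #{v' : ι → κ | freshIndices v v' = S}
      ≤ ∏ j, #(if j ∈ S then (univ : Finset κ) else univ.image v) :=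
        (card_le_card hsub).trans (Fintype.card_piFinset _).le
    _ ≤ ∏ j, if j ∈ S then Fintype.card κ else Fintype.card ι := by
        refine prod_le_prod' fun j _ => ?_
        split_ifs
        · exact le_rfl
        · exact card_image_le
    _ = Fintype.card κ ^ #S * Fintype.card ι ^ (Fintype.card ι - #S) := by
        rw [prod_ite, prod_const, prod_const, filter_mem_eq_inter, univ_inter,
          filter_notMem_eq_sdiff, ← compl_eq_univ_sdiff, card_compl]

theorem sum_sum_ite_freshIndices_le (I : Finset (ι → κ)) {F : (ι → κ) → (ι → κ) → ℝ} {g : ℕ → ℝ}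
    (hg : ∀ s, 0 ≤ g s)
    (hF : ∀ v ∈ I, ∀ v' ∈ I, freshIndices v v' ≠ univ → F v v' ≤ g #(freshIndices v v')) :
    ∑ v ∈ I, ∑ v' ∈ I, (if freshIndices v v' ≠ univ then F v v' else 0) ≤
      Fintype.card κ ^ Fintype.card ι * ∑ S ∈ (univ : Finset ι).ssubsets,
        (Fintype.card κ ^ #S * Fintype.card ι ^ (Fintype.card ι - #S) : ℝ) * g #S := by
  have hrow (v) (hv : v ∈ I) : ∑ v' ∈ I, (if freshIndices v v' ≠ univ then F v v' else 0) ≤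
      ∑ S ∈ (univ : Finset ι).ssubsets,
        (Fintype.card κ ^ #S * Fintype.card ι ^ (Fintype.card ι - #S) : ℝ) * g #S := by
    calc ∑ v' ∈ I, (if freshIndices v v' ≠ univ then F v v' else 0)
        ≤ ∑ v' ∈ I, ∑ S ∈ (univ : Finset ι).ssubsets,
            if freshIndices v v' = S then g #S else 0 := by
          refine sum_le_sum fun v' hv' => ?_
          rw [sum_ite_eq]
          by_cases h : freshIndices v v' = univ
          · simp [h]
          · simpa [h, ssubset_univ_iff] using hF v hv v' hv' h
      _ = ∑ S ∈ (univ : Finset ι).ssubsets, #{v' ∈ I | freshIndices v v' = S} * g #S := by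
          rw [sum_comm]
          simp only [← sum_filter, sum_const, nsmul_eq_mul]
      _ ≤ _ := by
          refine sum_le_sum fun S _ => mul_le_mul_of_nonneg_right ?_ (hg _)
          exact_mod_cast (card_le_card (filter_subset_filter _ (subset_univ I))).trans
            (card_filter_freshIndices_eq_le v S)
  refine (sum_le_card_nsmul I _ _ hrow).trans ?_
  rw [nsmul_eq_mul]
  refine mul_le_mul_of_nonneg_right ?_ (sum_nonneg fun S _ => mul_nonneg (by positivity) (hg _))
  exact_mod_cast (card_le_univ I).trans Fintype.card_fun.le

end Overlap

section Weights

namespace WeightTail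

variable {τ c : ℝ} {μW : Measure ℝ}

theorem ae_one_le (hW : WeightTail τ c μW) : ∀ᵐ x ∂μW, 1 ≤ x := by
  simpa [ae_iff, not_le, Set.Iio] using hW.2.1

theorem tendsto_measureReal_Ioi_div (hW : WeightTail τ c μW) {s : ℝ} (hs : 0 < s) :
    Tendsto (fun x : ℝ => μW.real (Set.Ioi (s * x)) / x ^ (1 - τ)) atTop
      (𝓝 (c * s ^ (1 - τ))) := by
  obtain ⟨hc, -, hlim⟩ := hW
  have hscaled := (hlim.comp (tendsto_id.const_mul_atTop hs)).const_mul (c * s ^ (1 - τ))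
  rw [mul_one] at hscaled
  refine hscaled.congr' ?_
  filter_upwards [eventually_gt_atTop 0] with x hx
  have : 0 < s ^ (1 - τ) := Real.rpow_pos_of_pos hs _
  simp only [Function.comp, id, Measure.real, Real.mul_rpow hs.le hx.le]
  field_simp

theorem exists_measureReal_Ici_le [IsProbabilityMeasure μW] (hτ : 1 ≤ τ)
    (hW : WeightTail τ c μW) :
    ∃ C, 0 < C ∧ ∀ x : ℝ, 0 < x → μW.real (Set.Ici x) ≤ C * x ^ (1 - τ) := by
  have hhalf := hW.tendsto_measureReal_Ioi_div one_half_pos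
  obtain ⟨x₀, hx₀⟩ := ((hhalf.eventually_lt_const (lt_add_one _)).and
    (eventually_gt_atTop 0)).exists_forall_of_atTop
  have hx₀pos : 0 < x₀ := (hx₀ x₀ le_rfl).2
  refine ⟨max (c * (1 / 2) ^ (1 - τ) + 1) (x₀ ^ (τ - 1)),
    lt_max_of_lt_right (Real.rpow_pos_of_pos hx₀pos _), fun x hx => ?_⟩
  have hpow : 0 < x ^ (1 - τ) := Real.rpow_pos_of_pos hx _
  obtain hle | hlt := le_or_gt x₀ x
  · have hsub : Set.Ici x ⊆ Set.Ioi (1 / 2 * x) :=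
      Set.Ici_subset_Ioi.2 (by linarith)
    calc μW.real (Set.Ici x) ≤ μW.real (Set.Ioi (1 / 2 * x)) := measureReal_mono hsub
      _ ≤ (c * (1 / 2) ^ (1 - τ) + 1) * x ^ (1 - τ) := ((div_lt_iff₀ hpow).1 (hx₀ x hle).1).le
      _ ≤ _ := mul_le_mul_of_nonneg_right (le_max_left _ _) hpow.le
  · calc μW.real (Set.Ici x) ≤ 1 := measureReal_le_one
      _ = x ^ (τ - 1) * x ^ (1 - τ) := by rw [← Real.rpow_add hx]; simp
      _ ≤ x₀ ^ (τ - 1) * x ^ (1 - τ) := by gcongr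
      _ ≤ _ := mul_le_mul_of_nonneg_right (le_max_right _ _) hpow.le

theorem exists_le_measureReal_Ioc [IsFiniteMeasure μW] (hτ : 1 < τ) (hW : WeightTail τ c μW)
    {s t : ℝ} (hs : 0 < s) (hst : s < t) :
    ∃ c₀, 0 < c₀ ∧ ∀ᶠ x : ℝ in atTop, c₀ * x ^ (1 - τ) ≤ μW.real (Set.Ioc (s * x) (t * x)) := by
  have hdiff := (hW.tendsto_measureReal_Ioi_div hs).sub
    (hW.tendsto_measureReal_Ioi_div (hs.trans hst))
  have hpos : 0 < c * s ^ (1 - τ) - c * t ^ (1 - τ) :=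
    sub_pos.2 (mul_lt_mul_of_pos_left (Real.rpow_lt_rpow_of_neg hs hst (by linarith)) hW.1)
  refine ⟨_, half_pos hpos, ?_⟩
  filter_upwards [hdiff.eventually_const_le (half_lt_self hpos), eventually_gt_atTop 0]
    with x hx hx0
  have hpow : 0 < x ^ (1 - τ) := Real.rpow_pos_of_pos hx0 _
  rw [← sub_div, le_div_iff₀ hpow] at hx
  rwa [← Set.Ioi_sdiff_Ioi, measureReal_sdiff (Set.Ioi_subset_Ioi (by gcongr)) measurableSet_Ioi]

end WeightTail

theorem integrable_id_of_measureReal_Ici_le {P : Measure ℝ} [IsProbabilityMeasure P]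
    (hP : ∀ᵐ x ∂P, 0 ≤ x) {C s : ℝ} (hs : s < -1)
    (htail : ∀ x : ℝ, 0 < x → P.real (Set.Ici x) ≤ C * x ^ s) : Integrable (fun x => x) P := by
  refine ⟨measurable_id.aestronglyMeasurable, ?_⟩
  rw [hasFiniteIntegral_iff_ofReal hP,
    lintegral_eq_lintegral_meas_lt P hP measurable_id.aemeasurable,
    ← Set.Ioc_union_Ioi_eq_Ioi zero_le_one]
  refine (lintegral_union_le _ _ _).trans_lt (ENNReal.add_lt_top.2 ⟨?_, ?_⟩)
  · exact (lintegral_mono fun t => prob_le_one).trans_lt (by simp)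
  · have hpow : IntegrableOn (fun t : ℝ => C * t ^ s) (Set.Ioi 1) :=
      (integrableOn_Ioi_rpow_of_lt hs one_pos).const_mul C
    refine (setLIntegral_mono' measurableSet_Ioi fun t ht => ?_).trans_lt hpow.lintegral_lt_top
    calc P {x | t < x} ≤ P (Set.Ici t) := measure_mono Set.Ioi_subset_Ici_self
      _ = ENNReal.ofReal (P.real (Set.Ici t)) := (ofReal_measureReal).symm
      _ ≤ ENNReal.ofReal (C * t ^ s) := ENNReal.ofReal_le_ofReal (htail t (one_pos.trans ht))

theorem wMean_pos {τ c : ℝ} {μW : Measure ℝ} [IsProbabilityMeasure μW] (hτ : 2 < τ)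
    (hW : WeightTail τ c μW) : 0 < wMean μW := by
  obtain ⟨C, -, hC⟩ := hW.exists_measureReal_Ici_le (by linarith)
  have hintegrable : Integrable (fun x => x) μW := integrable_id_of_measureReal_Ici_le
    (hW.ae_one_le.mono fun x hx => zero_le_one.trans hx) (by linarith) hC
  calc (0 : ℝ) < ∫ _, (1 : ℝ) ∂μW := by simp
    _ ≤ wMean μW := integral_mono_ae (integrable_const _) hintegrable hW.ae_one_le

end Weights

section Connection

variable {γ μbar : ℝ} {d n : ℕ} {w : Fin n → ℝ} {x : Fin n → Torus d} {u v : Fin n}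

theorem connProb_symm : connProb γ μbar d n w x u v = connProb γ μbar d n w x v u := by
  rw [connProb, connProb, mul_comm (w u), dist_comm]

theorem girgEdge_symm {ω : GirgΩ d n} :
    girgEdge γ μbar d n ω u v ↔ girgEdge γ μbar d n ω v u := by
  rw [girgEdge, girgEdge, connProb_symm, Sym2.eq_swap, ne_comm]

theorem girgEdge_of_le_mul (hγ : 0 ≤ γ) {ω : GirgΩ d n} (huv : u ≠ v) (hcoin : ω.2.2 s(u, v) ≤ 1)
    (hpos : 0 < n * μbar * dist (ω.2.1 u) (ω.2.1 v) ^ d)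
    (h : n * μbar * dist (ω.2.1 u) (ω.2.1 v) ^ d ≤ ω.1 u * ω.1 v) :
    girgEdge γ μbar d n ω u v :=
  ⟨huv, hcoin.trans (le_min le_rfl (Real.one_le_rpow ((one_le_div hpos).2 h) hγ))⟩

theorem mul_rpow_div_scaling {n : ℝ} (hn : 0 < n) (s t r a a' b : ℝ) :
    (s * n ^ a) * (t * n ^ a') / (n * μbar * (r * n ^ b) ^ d) =
      s * t / (μbar * r ^ d) * n ^ (a + a' - d * b - 1) := by
  rw [Real.rpow_sub hn, Real.rpow_sub hn, Real.rpow_add hn, Real.rpow_one, mul_comm (d : ℝ) b,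
    Real.rpow_mul hn.le, Real.rpow_natCast, mul_pow]
  field_simp

variable (hγ : 0 ≤ γ) (hμ : 0 < μbar) (hn : 0 < n) {s t r a a' b : ℝ}
include hγ hμ hn

theorem connProb_le_of_scaled (hr : 0 < r) (hu0 : 0 ≤ w u) (hv0 : 0 ≤ w v)
    (hu : w u ≤ s * (n : ℝ) ^ a) (hv : w v ≤ t * (n : ℝ) ^ a')
    (hx : r * (n : ℝ) ^ b ≤ dist (x u) (x v)) :
    connProb γ μbar d n w x u v ≤
      min 1 ((s * t / (μbar * r ^ d) * (n : ℝ) ^ (a + a' - d * b - 1)) ^ γ) := by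
  have hn0 : (0 : ℝ) < n := by exact_mod_cast hn
  rw [← mul_rpow_div_scaling hn0]
  have : 0 < r * (n : ℝ) ^ b := by positivity
  have hu0' : 0 ≤ s * (n : ℝ) ^ a := hu0.trans hu
  have hv0' : 0 ≤ t * (n : ℝ) ^ a' := hv0.trans hv
  unfold connProb
  gcongr

theorem le_connProb_of_scaled (hs : 0 ≤ s) (ht : 0 ≤ t) (hu : s * (n : ℝ) ^ a ≤ w u)
    (hv : t * (n : ℝ) ^ a' ≤ w v) (hx0 : 0 < dist (x u) (x v))
    (hx : dist (x u) (x v) ≤ r * (n : ℝ) ^ b) :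
    min 1 ((s * t / (μbar * r ^ d) * (n : ℝ) ^ (a + a' - d * b - 1)) ^ γ) ≤
      connProb γ μbar d n w x u v := by
  have hn0 : (0 : ℝ) < n := by exact_mod_cast hn
  rw [← mul_rpow_div_scaling hn0]
  have hu0 : 0 ≤ w u := le_trans (by positivity) hu
  have : 0 ≤ w u * w v := mul_nonneg hu0 (le_trans (by positivity) hv)
  have hr : 0 < r := (pos_iff_pos_of_mul_pos (hx0.trans_le hx)).2 (by positivity)
  unfold connProb
  gcongr

end Connection

section Tuples

variable {k d n : ℕ} {s : StarKind} {H : SimpleGraph (Fin k)} {γ μbar ε : ℝ} {α : Fin k → ℝ}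
  {β : Fin k → Fin k → ℝ} {ω : GirgΩ d n} {v : Fin k → Fin n}

/-- The set of tuples counted by `starNM`, with the conditions on `H` restricted to `i < j`. -/
def starTuples (s : StarKind) (H : SimpleGraph (Fin k)) (γ μbar ε : ℝ) (α : Fin k → ℝ)
    (β : Fin k → Fin k → ℝ) (d n : ℕ) (ω : GirgΩ d n) : Set (Fin k → Fin n) :=
  {v | v ∈ Mset ε α β d n ω.1 ω.2.1 ∧
    (∀ i j, i < j → H.Adj i j → girgEdge γ μbar d n ω (v i) (v j)) ∧
    (s = .ind → ∀ i j, i < j → ¬H.Adj i j → ¬girgEdge γ μbar d n ω (v i) (v j))}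

theorem forall_adj_girgEdge_iff :
    (∀ i j, H.Adj i j → girgEdge γ μbar d n ω (v i) (v j)) ↔
      ∀ i j, i < j → H.Adj i j → girgEdge γ μbar d n ω (v i) (v j) :=
  ⟨fun h i j _ => h i j, fun h i j hij => hij.ne.lt_or_gt.elim (fun hlt => h i j hlt hij)
    fun hlt => girgEdge_symm.1 (h j i hlt hij.symm)⟩

theorem forall_adj_iff_girgEdge_iff :
    (∀ i j, i ≠ j → (H.Adj i j ↔ girgEdge γ μbar d n ω (v i) (v j))) ↔
      (∀ i j, i < j → H.Adj i j → girgEdge γ μbar d n ω (v i) (v j)) ∧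
        ∀ i j, i < j → ¬H.Adj i j → ¬girgEdge γ μbar d n ω (v i) (v j) := by
  refine ⟨fun h => ⟨fun i j hij => (h i j hij.ne).1, fun i j hij => mt (h i j hij.ne).2⟩,
    fun h i j hij => ?_⟩
  have hlt {i j : Fin k} (hij : i < j) : H.Adj i j ↔ girgEdge γ μbar d n ω (v i) (v j) :=
    ⟨h.1 i j hij, not_imp_not.1 (h.2 i j hij)⟩
  obtain hij | hji := hij.lt_or_gt
  · exact hlt hij
  · rw [H.adj_comm, girgEdge_symm, hlt hji]

theorem starNM_eq_ncard : starNM s H γ μbar ε α β d n ω =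
    (starTuples s H γ μbar ε α β d n ω).ncard := by
  cases s
  · simp only [starNM, nIndM, starTuples, forall_adj_iff_girgEdge_iff, forall_const]
  · simp only [starNM, nSubM, starTuples, forall_adj_girgEdge_iff, reduceCtorEq,
      IsEmpty.forall_iff, and_true]

end Tuples

section FirstMoment

variable {k : ℕ}

theorem exists_lt_eq_minBeta (β : Fin k → Fin k → ℝ) {j : Fin k} (hj : 0 < j.val) :
    ∃ i, i < j ∧ β i j = minBeta β j := by
  have hfin : {x : ℝ | ∃ i, i < j ∧ x = β i j}.Finite := by
    refine (Set.finite_range (β · j)).subset ?_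
    rintro x ⟨i, -, rfl⟩
    exact ⟨i, rfl⟩
  have hne : {x : ℝ | ∃ i, i < j ∧ x = β i j}.Nonempty :=
    ⟨β ⟨0, j.pos⟩ j, ⟨0, j.pos⟩, Fin.lt_def.2 hj, rfl⟩
  obtain ⟨i, hi, hx⟩ := hne.csInf_mem hfin
  exact ⟨i, hi, hx.symm⟩

theorem minBeta_eq_zero (β : Fin k → Fin k → ℝ) {j : Fin k} (hj : j.val = 0) :
    minBeta β j = 0 := by
  have hempty : {x : ℝ | ∃ i, i < j ∧ x = β i j} = ∅ :=
    Set.eq_empty_of_forall_notMem fun x ⟨i, hi, _⟩ => by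
      rw [Fin.lt_def] at hi
      lia
  rw [minBeta, hempty, Real.sInf_empty]

open scoped Classical in
/-- The earlier vertex that `β` puts nearest to `j`; it is `j` itself for the first vertex. -/
def nearestEarlier (β : Fin k → Fin k → ℝ) (j : Fin k) : Fin k :=
  if hj : 0 < j.val then (exists_lt_eq_minBeta β hj).choose else j

theorem nearestEarlier_lt (β : Fin k → Fin k → ℝ) {j : Fin k} (hj : 0 < j.val) :
    nearestEarlier β j < j := by
  rw [nearestEarlier, dif_pos hj]
  exact (exists_lt_eq_minBeta β hj).choose_spec.1

theorem apply_nearestEarlier (β : Fin k → Fin k → ℝ) {j : Fin k} (hj : 0 < j.val) :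
    β (nearestEarlier β j) j = minBeta β j := by
  rw [nearestEarlier, dif_pos hj]
  exact (exists_lt_eq_minBeta β hj).choose_spec.2

variable {d n : ℕ} {γ μbar ε : ℝ} {α : Fin k → ℝ} {β : Fin k → Fin k → ℝ} {H : SimpleGraph (Fin k)}

open scoped Classical in
/-- The part of being a copy of `H` in `M_ε^{(α,β)}` on which the first moment bound rests: the
weights, the distance of each vertex to its nearest earlier one, and, for each edge, a coin below
the largest connection probability that `M_ε^{(α,β)}` allows. -/
def copyPattern (H : SimpleGraph (Fin k)) (γ μbar : ℝ) {ε : ℝ} (hε : 0 ≤ ε) (α : Fin k → ℝ)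
    (β : Fin k → Fin k → ℝ) (d n : ℕ) : GirgPattern d (Fin k) where
  weight i := windowIcc ε ((n : ℝ) ^ α i)
  measurableSet_weight _ := measurableSet_Icc
  children := {j | 0 < j.val}
  parent := nearestEarlier β
  depth j := j
  depth_parent_lt j hj := nearestEarlier_lt β (mem_filter.1 hj).2
  offset _ := 0
  radius j := (n : ℝ) ^ minBeta β j / ε
  radius_nonneg j := by positivity
  pairs := {p | p.1 < p.2 ∧ H.Adj p.1 p.2}
  swap_notMem_pairs p hp hp' := lt_asymm (mem_filter.1 hp).2.1 (mem_filter.1 hp').2.1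
  coin p := Set.Iic
    (min 1 ((ε⁻¹ * ε⁻¹ / (μbar * ε ^ d) * (n : ℝ) ^ (α p.1 + α p.2 - d * β p.1 p.2 - 1)) ^ γ))
  measurableSet_coin _ := measurableSet_Iic

theorem mem_event_copyPattern {s : StarKind} (hγ : 0 ≤ γ) (hμ : 0 < μbar) (hn : 0 < n)
    (hε : 0 < ε) {ω : GirgΩ d n} {v : Fin k → Fin n}
    (hv : v ∈ starTuples s H γ μbar ε α β d n ω) :
    ω ∈ (copyPattern H γ μbar hε.le α β d n).event v := by
  obtain ⟨⟨-, hweight, hdist⟩, hedge, -⟩ := hv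
  refine ⟨hweight, fun j hj => ?_, fun p hp => ?_⟩
  · have hj0 : 0 < j.val := (mem_filter.1 hj).2
    have hnear := (hdist _ _ (nearestEarlier_lt β hj0)).2
    rw [apply_nearestEarlier β hj0] at hnear
    simpa [copyPattern, dist_comm] using hnear
  · obtain ⟨hlt, hadj⟩ : p.1 < p.2 ∧ H.Adj p.1 p.2 := by simpa [copyPattern] using hp
    have hnonneg (i : Fin k) : 0 ≤ ω.1 (v i) := le_trans (by positivity) (hweight i).1
    refine (hedge _ _ hlt hadj).2.trans (connProb_le_of_scaled hγ hμ hn hε (hnonneg _)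
      (hnonneg _) ?_ ?_ (hdist _ _ hlt).1)
    · exact (hweight _).2.trans_eq (div_eq_inv_mul _ _)
    · exact (hweight _).2.trans_eq (div_eq_inv_mul _ _)

theorem measure_windowIcc_le {P : Measure ℝ} [IsFiniteMeasure P] {C t : ℝ}
    (htail : ∀ x : ℝ, 0 < x → P.real (Set.Ici x) ≤ C * x ^ t) (hε : 0 < ε) {N : ℝ} (hN : 0 < N)
    (a : ℝ) :
    P (windowIcc ε (N ^ a)) ≤ ENNReal.ofReal (C * ε ^ t * N ^ (t * a)) := by
  rw [← ofReal_measureReal]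
  refine ENNReal.ofReal_le_ofReal ?_
  calc P.real (windowIcc ε (N ^ a)) ≤ P.real (Set.Ici (ε * N ^ a)) :=
        measureReal_mono Set.Icc_subset_Ici_self
    _ ≤ C * (ε * N ^ a) ^ t := htail _ (by positivity)
    _ = C * ε ^ t * N ^ (t * a) := by
      rw [Real.mul_rpow hε.le (by positivity), ← Real.rpow_mul hN.le, mul_comm a, mul_assoc]

theorem min_one_ball_pow_le (hε : 0 < ε) {N : ℝ} (hN : 0 < N) (b : ℝ) :
    min 1 (2 * (N ^ b / ε)) ^ d ≤ (2 / ε) ^ d * N ^ (d * b) := by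
  calc min 1 (2 * (N ^ b / ε)) ^ d ≤ (2 * (N ^ b / ε)) ^ d := by
        gcongr
        exact min_le_right _ _
    _ = (2 / ε) ^ d * N ^ (d * b) := by
      rw [mul_comm (d : ℝ), Real.rpow_mul hN.le, Real.rpow_natCast, ← mul_pow]
      ring

theorem min_one_rpow_le {K N : ℝ} (hK : 0 ≤ K) (hN : 0 < N) (x : ℝ) :
    min 1 ((K * N ^ x) ^ γ) ≤ max 1 (K ^ γ) * N ^ (γ * min x 0) := by
  obtain hx | hx := le_total x 0
  · rw [min_eq_left hx]
    calc min 1 ((K * N ^ x) ^ γ) ≤ (K * N ^ x) ^ γ := min_le_right _ _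
      _ = K ^ γ * N ^ (γ * x) := by
        rw [Real.mul_rpow hK (by positivity), ← Real.rpow_mul hN.le, mul_comm γ]
      _ ≤ max 1 (K ^ γ) * N ^ (γ * x) := by
        gcongr
        exact le_max_right _ _
  · rw [min_eq_right hx, mul_zero, Real.rpow_zero, mul_one]
    exact (min_le_left _ _).trans (le_max_left _ _)

open scoped Classical in
theorem rpow_fExp (τ γ : ℝ) (d : ℕ) (H : SimpleGraph (Fin k)) (α : Fin k → ℝ)
    (β : Fin k → Fin k → ℝ) {N : ℝ} (hN : 0 < N) :
    N ^ fExp τ γ d H α β = N ^ k * ((∏ i, N ^ ((1 - τ) * α i)) *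
      ((∏ j : Fin k with 0 < j.val, N ^ (d * minBeta β j)) *
        ∏ p : Fin k × Fin k with p.1 < p.2 ∧ H.Adj p.1 p.2,
          N ^ (γ * min (α p.1 + α p.2 - d * β p.1 p.2 - 1) 0))) := by
  have hsum : ∑ j : Fin k with 0 < j.val, minBeta β j = ∑ j, minBeta β j :=
    sum_subset (subset_univ _) fun j _ hj => minBeta_eq_zero β (by simpa using hj)
  rw [← Real.rpow_sum_of_pos hN, ← Real.rpow_sum_of_pos hN, ← Real.rpow_sum_of_pos hN,
    ← mul_sum, ← mul_sum, ← mul_sum, hsum, ← Real.rpow_natCast, fExp, Real.rpow_add hN,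
    Real.rpow_add hN, Real.rpow_add hN]
  ring

theorem exists_prob_copyPattern_le {τ c : ℝ} {μW : Measure ℝ} [IsProbabilityMeasure μW]
    (hτ : 1 ≤ τ) (hW : WeightTail τ c μW) (hμ : 0 ≤ μbar) (hε : 0 < ε) :
    ∃ C, ∀ n : ℕ, 0 < n →
      (n : ℝ≥0∞) ^ k * (copyPattern H γ μbar hε.le α β d n).prob μW ≤
        ENNReal.ofReal (C * (n : ℝ) ^ fExp τ γ d H α β) := by
  classical
  obtain ⟨C, hC, htail⟩ := hW.exists_measureReal_Ici_le hτ
  set K : ℝ := ε⁻¹ * ε⁻¹ / (μbar * ε ^ d)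
  have hK : 0 ≤ K := by positivity
  have : 0 < max 1 (K ^ γ) := lt_max_of_lt_left one_pos
  refine ⟨(∏ _i : Fin k, C * ε ^ (1 - τ)) * ((∏ j : Fin k with 0 < j.val, (2 / ε) ^ d) *
    ∏ p : Fin k × Fin k with p.1 < p.2 ∧ H.Adj p.1 p.2, max 1 (K ^ γ)), fun n hn => ?_⟩
  have hn0 : (0 : ℝ) < n := by exact_mod_cast hn
  rw [rpow_fExp _ _ _ _ _ _ hn0]
  calc (n : ℝ≥0∞) ^ k * (copyPattern H γ μbar hε.le α β d n).prob μW
      ≤ (n : ℝ≥0∞) ^ k * ((∏ i, ENNReal.ofReal (C * ε ^ (1 - τ) * n ^ ((1 - τ) * α i))) *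
          ((∏ j : Fin k with 0 < j.val, ENNReal.ofReal ((2 / ε) ^ d * n ^ (d * minBeta β j))) *
            ∏ p : Fin k × Fin k with p.1 < p.2 ∧ H.Adj p.1 p.2, ENNReal.ofReal
              (max 1 (K ^ γ) * n ^ (γ * min (α p.1 + α p.2 - d * β p.1 p.2 - 1) 0)))) := by
        unfold GirgPattern.prob
        refine mul_le_mul' le_rfl (mul_le_mul' (prod_le_prod' fun i _ => ?_)
          (mul_le_mul' (prod_le_prod' fun j _ => ENNReal.ofReal_le_ofReal ?_)
            (prod_le_prod' fun p _ => ?_)))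
        · exact measure_windowIcc_le htail hε hn0 _
        · exact min_one_ball_pow_le hε hn0 _
        · refine (coinLaw_Iic _).trans_le (ENNReal.ofReal_le_ofReal ?_)
          exact (min_le_left _ _).trans (min_one_rpow_le hK hn0 _)
    _ = _ := by
        rw [← ENNReal.ofReal_natCast, ← ENNReal.ofReal_pow hn0.le,
          ← ENNReal.ofReal_prod_of_nonneg fun _ _ => by positivity,
          ← ENNReal.ofReal_prod_of_nonneg fun _ _ => by positivity,
          ← ENNReal.ofReal_prod_of_nonneg fun _ _ => by positivity,
          ← ENNReal.ofReal_mul (by positivity), ← ENNReal.ofReal_mul (by positivity),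
          ← ENNReal.ofReal_mul (by positivity)]
        simp only [prod_mul_distrib]
        ring_nf

theorem exists_measure_le_starNM_le {τ c : ℝ} {μW : Measure ℝ} [IsProbabilityMeasure μW]
    (hτ : 1 ≤ τ) (hW : WeightTail τ c μW) (hγ : 0 ≤ γ) (hμ : 0 < μbar) (hε : 0 < ε)
    (s : StarKind) :
    ∃ C, ∀ n : ℕ, 0 < n → ∀ θ : ℝ, 0 < θ →
      girgMeasure μW d n {ω | θ ≤ starNM s H γ μbar ε α β d n ω} ≤
        ENNReal.ofReal (C * (n : ℝ) ^ fExp τ γ d H α β / θ) := by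
  obtain ⟨C, hprob⟩ := exists_prob_copyPattern_le (k := k) (H := H) (α := α) (β := β) (d := d)
    hτ hW hμ.le hε
  refine ⟨C, fun n hn θ hθ => ?_⟩
  set P := copyPattern H γ μbar hε.le α β d n
  have hevent (v : Fin k → Fin n) :
      girgMeasure μW d n {ω | Function.Injective v ∧ ω ∈ P.event v} ≤ P.prob μW := by
    by_cases hv : Function.Injective v
    · simp only [hv, true_and, Set.ofPred_mem_eq, P.girgMeasure_event μW hv, le_rfl]
    · simp [hv]
  simp only [starNM_eq_ncard]
  refine (measure_le_ncard_le_of_subset _ (B := fun v => {ω | Function.Injective v ∧ ω ∈ P.event v})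
    (fun ω v hv => ⟨hv.1.1, mem_event_copyPattern hγ hμ hn hε hv⟩) hθ).trans ?_
  rw [ENNReal.ofReal_div_of_pos hθ]
  gcongr
  calc ∑ v, girgMeasure μW d n {ω | Function.Injective v ∧ ω ∈ P.event v}
      ≤ ∑ _v : Fin k → Fin n, P.prob μW := sum_le_sum fun v _ => hevent v
    _ = (n : ℝ≥0∞) ^ k * P.prob μW := by simp
    _ ≤ _ := hprob n hn

end FirstMoment

section Pinned

namespace GirgPattern

variable {d n : ℕ} {ι : Type*} [Fintype ι] [DecidableEq ι] {root : ι} {W : Set ℝ}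
  (hW : MeasurableSet W)

/-- The pattern in which all weights lie in `W` and each vertex `j` lies within distance `r` of the
position of `root` translated by `y j`. -/
def pinned (root : ι) (hW : MeasurableSet W) (y : ι → Torus d) {r : ℝ} (hr : 0 ≤ r)
    {pairs : Finset (ι × ι)} (hpairs : ∀ p ∈ pairs, p.swap ∉ pairs) {B : ι × ι → Set ℝ}
    (hB : ∀ p, MeasurableSet (B p)) : GirgPattern d ι where
  weight _ := W
  measurableSet_weight _ := hW
  children := univ.erase root
  parent _ := root
  depth j := if j = root then 0 else 1
  depth_parent_lt j hj := by simp [ne_of_mem_erase hj]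
  offset := y
  radius _ := r
  radius_nonneg _ := hr
  pairs := pairs
  swap_notMem_pairs := hpairs
  coin := B
  measurableSet_coin := hB

theorem prob_pinned (y : ι → Torus d) {r : ℝ} (hr : 0 ≤ r) {pairs : Finset (ι × ι)}
    (hpairs : ∀ p ∈ pairs, p.swap ∉ pairs) {B : ι × ι → Set ℝ} (hB : ∀ p, MeasurableSet (B p))
    (μW : Measure ℝ) :
    (pinned root hW y hr hpairs hB).prob μW =
      μW W ^ Fintype.card ι * (ENNReal.ofReal (min 1 (2 * r) ^ d) ^ (Fintype.card ι - 1) *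
        ∏ p ∈ pairs, coinLaw (B p)) := by
  simp [prob, pinned]

theorem dist_le_of_mem_event_pinned {y : ι → Torus d} {r : ℝ} {hr : 0 ≤ r}
    {pairs : Finset (ι × ι)} {hpairs : ∀ p ∈ pairs, p.swap ∉ pairs} {B : ι × ι → Set ℝ}
    {hB : ∀ p, MeasurableSet (B p)} {v : ι → Fin n} {ω : GirgΩ d n}
    (hω : ω ∈ (pinned root hW y hr hpairs hB).event v) (hy : y root = 0) (j : ι) :
    dist (ω.2.1 (v j)) (ω.2.1 (v root) + y j) ≤ r := by
  obtain rfl | hj := eq_or_ne j root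
  · simpa [hy] using hr
  · exact hω.2.1 j (mem_erase.2 ⟨hj, mem_univ j⟩)

/-- The pattern in which all weights lie in `W` and all vertices lie within distance `r` of
`root`. -/
def cluster (root : ι) (hW : MeasurableSet W) (d : ℕ) {r : ℝ} (hr : 0 ≤ r) : GirgPattern d ι :=
  pinned root hW 0 hr (pairs := ∅) (by simp) (B := fun _ => Set.univ) fun _ => .univ

theorem mem_event_cluster {r : ℝ} {hr : 0 ≤ r} {v : ι → Fin n} {ω : GirgΩ d n} :
    ω ∈ (cluster root hW d hr).event v ↔
      (∀ i, ω.1 (v i) ∈ W) ∧ ∀ j, dist (ω.2.1 (v j)) (ω.2.1 (v root)) ≤ r := by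
  refine ⟨fun hω => ⟨hω.1, fun j => ?_⟩, fun ⟨hweight, hdist⟩ => ⟨hweight, fun j _ => ?_, ?_⟩⟩
  · simpa using dist_le_of_mem_event_pinned hW hω rfl j
  · simpa [cluster, pinned] using hdist j
  · simp [cluster, pinned]

theorem event_pinned_subset_cluster {y : ι → Torus d} (hy : y root = 0) {r R : ℝ} (hr : 0 ≤ r)
    (hR : 0 ≤ R) (hyR : ∀ j, ‖y j‖ + r ≤ R) {pairs : Finset (ι × ι)}
    (hpairs : ∀ p ∈ pairs, p.swap ∉ pairs) {B : ι × ι → Set ℝ} (hB : ∀ p, MeasurableSet (B p))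
    (v : ι → Fin n) :
    (pinned root hW y hr hpairs hB).event v ⊆ (cluster root hW d hR).event v := by
  refine fun ω hω => (mem_event_cluster hW).2 ⟨hω.1, fun j => ?_⟩
  calc dist (ω.2.1 (v j)) (ω.2.1 (v root))
      ≤ dist (ω.2.1 (v j)) (ω.2.1 (v root) + y j) +
          dist (ω.2.1 (v root) + y j) (ω.2.1 (v root)) := dist_triangle _ _ _
    _ ≤ r + ‖y j‖ := by
        rw [dist_self_add_left]
        gcongr
        exact dist_le_of_mem_event_pinned hW hω hy j
    _ ≤ R := by linarith [hyR j]

theorem event_cluster_inter_subset {R : ℝ} (hR : 0 ≤ R) {v v' : ι → Fin n} {i j : ι}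
    (hij : v i = v' j) (S : Finset ι) :
    (cluster root hW d hR).event v ∩ (cluster root hW d hR).event v' ⊆
      (cluster (Sum.inl root : ι ⊕ S) hW d (by positivity : 0 ≤ 3 * R)).event
        (Sum.elim v fun l => v' l) := by
  rintro ω ⟨hω, hω'⟩
  rw [mem_event_cluster] at hω hω' ⊢
  obtain ⟨hweight, hdist⟩ := hω
  obtain ⟨hweight', hdist'⟩ := hω'
  refine ⟨Sum.rec hweight fun l => hweight' l, Sum.rec (fun l => ?_) fun l => ?_⟩
  · exact (hdist l).trans (by linarith)
  · have hjoin : dist (ω.2.1 (v' root)) (ω.2.1 (v i)) ≤ R := by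
      rw [hij, dist_comm]
      exact hdist' j
    have := dist_triangle4 (ω.2.1 (v' l)) (ω.2.1 (v' root)) (ω.2.1 (v i)) (ω.2.1 (v root))
    simp only [Sum.elim_inl, Sum.elim_inr]
    linarith [hdist' l, hdist i]

theorem girgMeasure_cluster_inter_le {R : ℝ} (hR : 0 ≤ R) (μW : Measure ℝ)
    [IsProbabilityMeasure μW] {v v' : ι → Fin n} (hv : Function.Injective v)
    (hv' : Function.Injective v') (hvv' : freshIndices v v' ≠ univ) :
    (girgMeasure μW d n).real
        ((cluster root hW d hR).event v ∩ (cluster root hW d hR).event v') ≤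
      μW.real W ^ (Fintype.card ι + #(freshIndices v v')) *
        ((6 * R) ^ d) ^ (Fintype.card ι - 1 + #(freshIndices v v')) := by
  obtain ⟨j, hj⟩ : ∃ j, j ∉ freshIndices v v' := by simpa [eq_univ_iff_forall] using hvv'
  obtain ⟨i, hij⟩ : ∃ i, v i = v' j := by simpa [mem_freshIndices] using hj
  have hinj : Function.Injective (Sum.elim v fun l : freshIndices v v' => v' l) :=
    hv.sumElim (hv'.comp Subtype.val_injective) fun i l => mem_freshIndices.1 l.2 i
  have hcard : Fintype.card ι ≠ 0 := (Fintype.card_pos_iff.2 ⟨i⟩).ne'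
  have hR3 : 0 ≤ 3 * R := by positivity
  calc (girgMeasure μW d n).real
        ((cluster root hW d hR).event v ∩ (cluster root hW d hR).event v')
      ≤ (girgMeasure μW d n).real ((cluster (Sum.inl root : ι ⊕ freshIndices v v') hW d hR3).event
          (Sum.elim v fun l => v' l)) :=
        measureReal_mono (event_cluster_inter_subset hW hR hij _)
    _ = μW.real W ^ (Fintype.card ι + #(freshIndices v v')) *
          (min 1 (6 * R) ^ d) ^ (Fintype.card ι - 1 + #(freshIndices v v')) := by
        have hmin : 0 ≤ min 1 (2 * (3 * R)) ^ d := by positivity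
        rw [measureReal_def, girgMeasure_event _ _ hinj, cluster, prob_pinned]
        simp only [prod_empty, mul_one, Fintype.card_sum, Fintype.card_coe, ENNReal.toReal_mul,
          ENNReal.toReal_pow, ENNReal.toReal_ofReal hmin, measureReal_def]
        congr 2
        · ring_nf
        · lia
    _ ≤ _ := by
        gcongr
        exact min_le_right _ _

theorem measure_sum_indicator_event_lt_le (P : GirgPattern d ι) {R : ℝ} (hR : 0 ≤ R)
    (hP : ∀ v : ι → Fin n, P.event v ⊆ (cluster root hW d hR).event v) (μW : Measure ℝ)
    [IsProbabilityMeasure μW] (hprob : 0 < (P.prob μW).toReal) {I : Finset (ι → Fin n)}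
    (hI : ∀ v ∈ I, Function.Injective v) (hne : I.Nonempty) :
    girgMeasure μW d n {ω | ∑ v ∈ I, (P.event v).indicator (1 : GirgΩ d n → ℝ) ω <
        #I * (P.prob μW).toReal / 2} ≤
      ENNReal.ofReal ((n ^ Fintype.card ι * ∑ S ∈ (univ : Finset ι).ssubsets,
        (n ^ #S * Fintype.card ι ^ (Fintype.card ι - #S) : ℝ) *
          (μW.real W ^ (Fintype.card ι + #S) * ((6 * R) ^ d) ^ (Fintype.card ι - 1 + #S))) /
        (#I * (P.prob μW).toReal / 2) ^ 2) := by
  have hmean : ∑ v ∈ I, (girgMeasure μW d n).real (P.event v) = #I * (P.prob μW).toReal := by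
    rw [sum_congr rfl fun v hv => by rw [measureReal_def, P.girgMeasure_event μW (hI v hv)],
      sum_const, nsmul_eq_mul]
  have hindep (v) (hv : v ∈ I) (v') (hv' : v' ∈ I) (hfresh : ¬freshIndices v v' ≠ univ) :
      (girgMeasure μW d n).real (P.event v ∩ P.event v') =
        (girgMeasure μW d n).real (P.event v) * (girgMeasure μW d n).real (P.event v') := by
    have hdisj (i j : ι) : v i ≠ v' j :=
      mem_freshIndices.1 (not_not.1 hfresh ▸ mem_univ j) i
    simp only [measureReal_def,
      girgMeasure_event_inter P P μW (hI v hv) (hI v' hv') hdisj, ENNReal.toReal_mul]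
  have : (0 : ℝ) < #I := by exact_mod_cast hne.card_pos
  refine (measure_sum_indicator_lt_half_le _ I (fun v => P.measurableSet_event v)
    (fun v v' => freshIndices v v' ≠ univ) hindep hmean (by positivity)).trans
    (ENNReal.ofReal_le_ofReal ?_)
  have hoverlap := sum_sum_ite_freshIndices_le I
    (F := fun v v' => (girgMeasure μW d n).real (P.event v ∩ P.event v'))
    (g := fun s => μW.real W ^ (Fintype.card ι + s) * ((6 * R) ^ d) ^ (Fintype.card ι - 1 + s))
    (fun s => by positivity) fun v hv v' hv' hfresh =>
      (measureReal_mono (Set.inter_subset_inter (hP v) (hP v'))).trans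
        (girgMeasure_cluster_inter_le hW hR μW (hI v hv) (hI v' hv') hfresh)
  rw [Fintype.card_fin] at hoverlap
  gcongr

end GirgPattern

end Pinned

section SecondMoment

variable {ι : Type*} [Fintype ι] [DecidableEq ι]

theorem sum_ssubsets_overlap_le [Nonempty ι] {n p U q : ℝ} (hn : 0 < n) (hp : 0 < p) (hU : 0 < U)
    (hq : 0 < q) (hq1 : q ≤ 1) (hqU : q ≤ n * p * U) :
    n ^ Fintype.card ι * ∑ S ∈ (univ : Finset ι).ssubsets,
        (n ^ #S * Fintype.card ι ^ (Fintype.card ι - #S) : ℝ) *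
          (p ^ (Fintype.card ι + #S) * U ^ (Fintype.card ι - 1 + #S)) ≤
      2 ^ Fintype.card ι * (Fintype.card ι ^ Fintype.card ι * ((n * p) ^ (2 * Fintype.card ι) *
        U ^ (2 * (Fintype.card ι - 1)) / (n * p * q ^ Fintype.card ι))) := by
  set k := Fintype.card ι
  have hk1 : 1 ≤ k := Fintype.card_pos
  set N := n * p
  have : 0 < N := mul_pos hn hp
  have hterm (S) (hS : S ∈ (univ : Finset ι).ssubsets) :
      n ^ k * ((n ^ #S * k ^ (k - #S)) * (p ^ (k + #S) * U ^ (k - 1 + #S))) ≤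
        k ^ k * (N ^ (2 * k) * U ^ (2 * (k - 1)) / (N * q ^ k)) := by
    have hcard : #S < k := card_lt_card (mem_ssubsets.1 hS)
    have hqpow : q ^ k ≤ (N * U) ^ (k - 1 - #S) :=
      (pow_le_pow_of_le_one hq.le hq1 (by lia)).trans (pow_le_pow_left₀ hq.le hqU _)
    have hNU : N ^ (k + #S) * U ^ (k - 1 + #S) ≤
        N ^ (2 * k) * U ^ (2 * (k - 1)) / (N * q ^ k) := by
      rw [le_div_iff₀ (by positivity)]
      calc N ^ (k + #S) * U ^ (k - 1 + #S) * (N * q ^ k)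
          ≤ N ^ (k + #S) * U ^ (k - 1 + #S) * (N * (N * U) ^ (k - 1 - #S)) := by gcongr
        _ = N ^ (k + #S + 1 + (k - 1 - #S)) * U ^ (k - 1 + #S + (k - 1 - #S)) := by ring
        _ = N ^ (2 * k) * U ^ (2 * (k - 1)) := by congr 2 <;> lia
    calc n ^ k * ((n ^ #S * k ^ (k - #S)) * (p ^ (k + #S) * U ^ (k - 1 + #S)))
        = (k : ℝ) ^ (k - #S) * (N ^ (k + #S) * U ^ (k - 1 + #S)) := by ring
      _ ≤ _ := by
        gcongr
        · exact_mod_cast hk1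
        · exact Nat.sub_le _ _
  have hcard : (#(univ : Finset ι).ssubsets : ℝ) ≤ 2 ^ k := by
    exact_mod_cast (card_le_univ _).trans_eq (Fintype.card_finset)
  calc _ ≤ ∑ _S ∈ (univ : Finset ι).ssubsets,
        (k : ℝ) ^ k * (N ^ (2 * k) * U ^ (2 * (k - 1)) / (N * q ^ k)) := by
        rw [mul_sum]
        exact sum_le_sum hterm
    _ ≤ _ := by
        rw [sum_const, nsmul_eq_mul]
        gcongr

namespace GirgPattern

theorem measure_sum_indicator_pinned_lt_le {d n : ℕ} (hn : 0 < n) {root : ι}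
    {μW : Measure ℝ} [IsProbabilityMeasure μW] {W : Set ℝ} (hW : MeasurableSet W)
    (hW0 : 0 < μW.real W) {y : ι → Torus d} (hy : y root = 0) {r R : ℝ} (hr : 0 < r)
    (hr1 : 2 * r ≤ 1) (hyR : ∀ j, ‖y j‖ + r ≤ R) {pairs : Finset (ι × ι)}
    (hpairs : ∀ p ∈ pairs, p.swap ∉ pairs) {B : ι × ι → Set ℝ} (hB : ∀ p, MeasurableSet (B p))
    {κ : ℝ} (hκ : (∏ p ∈ pairs, coinLaw (B p)).toReal = κ) (hκ0 : 0 < κ)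
    {q : ℝ} (hq : 0 < q) (hq1 : q ≤ 1) (hqR : q ≤ n * μW.real W * (6 * R) ^ d)
    {I : Finset (ι → Fin n)} (hinj : ∀ v ∈ I, Function.Injective v)
    (hI : (n : ℝ) ^ Fintype.card ι / 2 ≤ #I) :
    girgMeasure μW d n {ω | ∑ v ∈ I, ((pinned root hW y hr.le hpairs hB).event v).indicator
        (1 : GirgΩ d n → ℝ) ω <
          (n * μW.real W) ^ Fintype.card ι * ((2 * r) ^ d) ^ (Fintype.card ι - 1) * κ / 4} ≤
      ENNReal.ofReal (16 * 2 ^ Fintype.card ι * Fintype.card ι ^ Fintype.card ι *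
        ((3 * R / r) ^ d) ^ (2 * (Fintype.card ι - 1)) / (q ^ Fintype.card ι * κ ^ 2) /
          (n * μW.real W)) := by
  have : Nonempty ι := ⟨root⟩
  have hn0 : (0 : ℝ) < n := by exact_mod_cast hn
  have hR : 0 < R := lt_of_lt_of_le (by positivity) (hyR root)
  have hI0 : (0 : ℝ) < #I := lt_of_lt_of_le (by positivity) hI
  set P := pinned root hW y hr.le hpairs hB
  set k := Fintype.card ι
  set w := μW.real W
  have hprob : (P.prob μW).toReal = w ^ k * (((2 * r) ^ d) ^ (k - 1) * κ) := by
    have : 0 ≤ (2 * r) ^ d := by positivity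
    simp only [P, prob_pinned, min_eq_right hr1, ENNReal.toReal_mul, ENNReal.toReal_pow,
      ENNReal.toReal_ofReal this, hκ, w, k, measureReal_def]
  have hmean : (n * w) ^ k * ((2 * r) ^ d) ^ (k - 1) * κ / 4 ≤ #I * (P.prob μW).toReal / 2 := by
    calc (n * w) ^ k * ((2 * r) ^ d) ^ (k - 1) * κ / 4
        = n ^ k / 2 * (P.prob μW).toReal / 2 := by rw [hprob]; ring
      _ ≤ #I * (P.prob μW).toReal / 2 := by gcongr
  have hchebyshev := measure_sum_indicator_event_lt_le hW P hR.le
    (event_pinned_subset_cluster hW hy hr.le hR.le hyR hpairs hB) μW (by rw [hprob]; positivity)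
    hinj (card_pos.1 (by exact_mod_cast hI0))
  refine (measure_mono fun ω hω => lt_of_lt_of_le hω hmean).trans
    (hchebyshev.trans (ENNReal.ofReal_le_ofReal ?_))
  calc _ ≤ 2 ^ k * (k ^ k * ((n * w) ^ (2 * k) * ((6 * R) ^ d) ^ (2 * (k - 1)) /
            (n * w * q ^ k))) / ((n * w) ^ k * ((2 * r) ^ d) ^ (k - 1) * κ / 4) ^ 2 :=
        div_le_div₀ (by positivity)
          (sum_ssubsets_overlap_le (ι := ι) hn0 hW0 (by positivity) hq hq1 hqR) (by positivity)
          (pow_le_pow_left₀ (by positivity) hmean 2)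
    _ = _ := by
        have hratio : 6 * R = 3 * R / r * (2 * r) := by field_simp; ring
        rw [hratio, mul_pow _ (2 * r)]
        field_simp
        ring

end GirgPattern

end SecondMoment

section Template

variable {k d n : ℕ} {s : StarKind} {H : SimpleGraph (Fin k)} {γ μbar ε t η a b : ℝ}
  {ρ : Fin k → Fin k → ℝ} {z : Fin k → Torus d} {W : Set ℝ}

/-- The profile `ρ` of distances in units of `n ^ b` respects the distance windows and, for the
induced count, leaves the nonedges of `H` with probability less than one when `d * b = 2 * a - 1`
and the weights are at most `t * n ^ a`; both even after moving every vertex by `η * n ^ b`. -/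
def IsTemplate (s : StarKind) (H : SimpleGraph (Fin k)) (μbar ε : ℝ) (d : ℕ) (t η : ℝ)
    (ρ : Fin k → Fin k → ℝ) : Prop :=
  ∀ i j, i < j → ε < ρ i j - 2 * η ∧ ρ i j + 2 * η < 1 / ε ∧
    (s = .ind → ¬H.Adj i j → t * t < μbar * (ρ i j - 2 * η) ^ d)

theorem IsTemplate.exists_pos (h : IsTemplate s H μbar ε d t 0 ρ) :
    ∃ η, 0 < η ∧ 2 * η ≤ 1 ∧ IsTemplate s H μbar ε d (t + η) η ρ := by
  have hopen : ∀ᶠ η in 𝓝 (0 : ℝ), 2 * η ≤ 1 ∧ IsTemplate s H μbar ε d (t + η) η ρ := by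
    simp only [IsTemplate, eventually_and, eventually_all]
    refine ⟨(eventually_le_nhds (by norm_num : (0 : ℝ) < 1 / 2)).mono fun η hη => by linarith,
      fun i j hij => ?_⟩
    obtain ⟨hlow, hupp, hnonedge⟩ := h i j hij
    refine ⟨?_, ?_, fun hs hadj => ?_⟩
    · exact ContinuousAt.eventually_lt (by fun_prop) (by fun_prop) hlow
    · exact ContinuousAt.eventually_lt (by fun_prop) (by fun_prop) hupp
    · exact ContinuousAt.eventually_lt (by fun_prop) (by fun_prop)
        (by simpa using hnonedge hs hadj)
  obtain ⟨η, hη, hpos⟩ := ((hopen.filter_mono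
    (nhdsWithin_le_nhds (s := Set.Ioi 0))).and eventually_mem_nhdsWithin).exists
  exact ⟨η, hpos, hη⟩

open scoped Classical in
/-- Coin values that force the edges of `H` and, for the induced count, exclude its nonedges. -/
def templateCoin (s : StarKind) (H : SimpleGraph (Fin k)) (γ μbar ε : ℝ) (d : ℕ) (t η : ℝ)
    (ρ : Fin k → Fin k → ℝ) (p : Fin k × Fin k) : Set ℝ :=
  if H.Adj p.1 p.2 then Set.Iic (min 1 ((ε * ε / (μbar * (1 / ε) ^ d)) ^ γ))
  else if s = .ind then Set.Ioi ((t * t / (μbar * (ρ p.1 p.2 - 2 * η) ^ d)) ^ γ)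
  else Set.univ

theorem measurableSet_templateCoin (p : Fin k × Fin k) :
    MeasurableSet (templateCoin s H γ μbar ε d t η ρ p) := by
  unfold templateCoin
  split_ifs
  exacts [measurableSet_Iic, measurableSet_Ioi, .univ]

theorem coinLaw_templateCoin_pos (hγ : 0 < γ) (hμ : 0 < μbar) (hε : 0 < ε)
    (hρ : IsTemplate s H μbar ε d t η ρ) {p : Fin k × Fin k} (hp : p.1 < p.2) :
    0 < coinLaw (templateCoin s H γ μbar ε d t η ρ p) := by
  obtain ⟨hlow, -, hnonedge⟩ := hρ p.1 p.2 hp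
  have : 0 < ρ p.1 p.2 - 2 * η := hε.trans hlow
  unfold templateCoin
  split_ifs with hadj hs
  · rw [coinLaw_Iic, ENNReal.ofReal_pos]
    positivity
  · have : 0 ≤ t * t := mul_self_nonneg t
    refine coinLaw_Ioi_pos (by positivity) (Real.rpow_lt_one (by positivity) ?_ hγ)
    exact (div_lt_one (by positivity)).2 (hnonedge hs hadj)
  · simp

theorem toReal_prod_coinLaw_templateCoin_pos (hγ : 0 < γ) (hμ : 0 < μbar) (hε : 0 < ε)
    (hρ : IsTemplate s H μbar ε d t η ρ) :
    0 < (∏ p : Fin k × Fin k with p.1 < p.2,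
      coinLaw (templateCoin s H γ μbar ε d t η ρ p)).toReal :=
  ENNReal.toReal_pos
    (prod_ne_zero_iff.2 fun _ hp =>
      (coinLaw_templateCoin_pos hγ hμ hε hρ (mem_filter.1 hp).2).ne')
    (ENNReal.prod_ne_top fun _ _ => measure_ne_top _ _)

theorem swap_notMem_filter_fst_lt_snd (p : Fin k × Fin k)
    (hp : p ∈ ({p | p.1 < p.2} : Finset (Fin k × Fin k))) :
    p.swap ∉ ({p | p.1 < p.2} : Finset (Fin k × Fin k)) := fun hp' =>
  (mem_filter.1 hp).2.asymm (mem_filter.1 hp').2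

/-- The pattern that places copies of `H` near a translate of the configuration `z`. -/
def templatePattern [NeZero k] (s : StarKind) (H : SimpleGraph (Fin k)) (γ μbar ε t η : ℝ)
    (ρ : Fin k → Fin k → ℝ) (hW : MeasurableSet W) (z : Fin k → Torus d) {r : ℝ} (hr : 0 ≤ r) :
    GirgPattern d (Fin k) :=
  .pinned 0 hW (fun j => z j - z 0) hr
    swap_notMem_filter_fst_lt_snd
    (measurableSet_templateCoin (s := s) (H := H) (γ := γ) (μbar := μbar) (ε := ε) (d := d)
      (t := t) (η := η) (ρ := ρ))

section Counted

variable [NeZero k] (hz : ∀ i j, i < j → dist (z i) (z j) = ρ i j * (n : ℝ) ^ b)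
  (hρ : IsTemplate s H μbar ε d t η ρ) {hW : MeasurableSet W} {hr : 0 ≤ η * (n : ℝ) ^ b}
  {v : Fin k → Fin n} {ω : GirgΩ d n}
include hz

theorem dist_mem_Icc_of_mem_event_templatePattern
    (hω : ω ∈ (templatePattern s H γ μbar ε t η ρ hW z hr).event v) {i j : Fin k} (hij : i < j) :
    dist (ω.2.1 (v i)) (ω.2.1 (v j)) ∈
      Set.Icc ((ρ i j - 2 * η) * (n : ℝ) ^ b) ((ρ i j + 2 * η) * (n : ℝ) ^ b) := by
  have hclose := GirgPattern.dist_le_of_mem_event_pinned hW hω (sub_self (z 0))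
  have hperturb := abs_le.1 ((Real.dist_eq _ _).symm.trans_le (dist_dist_dist_le
    (ω.2.1 (v i)) (ω.2.1 (v j)) (ω.2.1 (v 0) + (z i - z 0)) (ω.2.1 (v 0) + (z j - z 0))))
  rw [dist_add_left, dist_sub_right, hz i j hij] at hperturb
  constructor <;> linarith [hclose i, hclose j]

include hρ

theorem mem_Mset_of_mem_event_templatePattern
    (hω : ω ∈ (templatePattern s H γ μbar ε t η ρ hW z hr).event v)
    (hWsub : W ⊆ windowIcc ε ((n : ℝ) ^ a)) (hv : Function.Injective v) :
    v ∈ Mset ε (fun _ => a) (fun _ _ => b) d n ω.1 ω.2.1 := by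
  have : 0 ≤ (n : ℝ) ^ b := by positivity
  refine ⟨hv, fun i => hWsub (hω.1 i), fun i j hij => ?_⟩
  obtain ⟨hdist, hdist'⟩ := dist_mem_Icc_of_mem_event_templatePattern hz hω hij
  obtain ⟨hlow, hupp, -⟩ := hρ i j hij
  refine ⟨le_trans (by gcongr) hdist, hdist'.trans ?_⟩
  rw [div_eq_mul_one_div, mul_comm _ (1 / ε)]
  gcongr

variable (hn : 0 < n) (hγ : 0 ≤ γ) (hμ : 0 < μbar) (hε : 0 < ε) (hab : d * b = 2 * a - 1)
  (hWsub : W ⊆ windowIcc ε ((n : ℝ) ^ a))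
include hn hγ hμ hε hab hWsub

theorem mem_starTuples_of_mem_event_templatePattern (hWle : W ⊆ Set.Iic (t * (n : ℝ) ^ a))
    (hω : ω ∈ (templatePattern s H γ μbar ε t η ρ hW z hr).event v) (hv : Function.Injective v) :
    v ∈ starTuples s H γ μbar ε (fun _ => a) (fun _ _ => b) d n ω := by
  have hM := mem_Mset_of_mem_event_templatePattern hz hρ hω hWsub hv
  have hscale : (n : ℝ) ^ (a + a - d * b - 1) = 1 := by
    rw [show a + a - d * b - 1 = 0 by linarith, Real.rpow_zero]
  have hcoin {i j} (hij : i < j) :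
      ω.2.2 s(v i, v j) ∈ templateCoin s H γ μbar ε d t η ρ (i, j) :=
    hω.2.2 (i, j) (mem_filter.2 ⟨mem_univ _, hij⟩)
  have hpos {i j} (hij : i < j) : 0 < dist (ω.2.1 (v i)) (ω.2.1 (v j)) :=
    lt_of_lt_of_le (by positivity) (hM.2.2 i j hij).1
  have hw (i) : 0 ≤ ω.1 (v i) := le_trans (by positivity) (hM.2.1 i).1
  refine ⟨hM, fun i j hij hadj => ⟨hv.ne hij.ne, ?_⟩, fun hs i j hij hadj hedge => ?_⟩
  · have hconn := le_connProb_of_scaled (r := 1 / ε) hγ hμ hn hε.le hε.le (hM.2.1 i).1 (hM.2.1 j).1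
      (hpos hij) ((hM.2.2 i j hij).2.trans_eq (by ring))
    rw [hscale, mul_one] at hconn
    refine le_trans ?_ hconn
    simpa [templateCoin, hadj] using hcoin hij
  · have hr : 0 < ρ i j - 2 * η := hε.trans (hρ i j hij).1
    have hconn := connProb_le_of_scaled hγ hμ hn hr (hw i) (hw j) (hWle (hω.1 i)) (hWle (hω.1 j))
      (dist_mem_Icc_of_mem_event_templatePattern hz hω hij).1
    rw [hscale, mul_one] at hconn
    have hlt : (t * t / (μbar * (ρ i j - 2 * η) ^ d)) ^ γ < ω.2.2 s(v i, v j) := by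
      simpa [templateCoin, hadj, hs] using hcoin hij
    exact (hlt.trans_le (hedge.2.trans hconn)).not_ge (min_le_right _ _)

theorem sum_indicator_templatePattern_le_starNM (hWle : W ⊆ Set.Iic (t * (n : ℝ) ^ a))
    (hr : 0 ≤ η * (n : ℝ) ^ b) (hW : MeasurableSet W) (ω : GirgΩ d n) {I : Finset (Fin k → Fin n)}
    (hI : ∀ v ∈ I, Function.Injective v) :
    ∑ v ∈ I, ((templatePattern s H γ μbar ε t η ρ hW z hr).event v).indicator
        (1 : GirgΩ d n → ℝ) ω ≤ starNM s H γ μbar ε (fun _ => a) (fun _ _ => b) d n ω := by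
  rw [starNM_eq_ncard, ncard_eq_sum_indicator]
  refine (sum_le_sum fun v hv => ?_).trans (sum_le_univ_sum_of_nonneg fun v =>
    Set.indicator_nonneg (fun _ _ => zero_le_one) _)
  by_cases hω : ω ∈ (templatePattern s H γ μbar ε t η ρ hW z hr).event v
  · have hcounted := mem_starTuples_of_mem_event_templatePattern hz hρ hn hγ hμ hε hab hWsub
      hWle hω (hI v hv)
    rw [Set.indicator_of_mem hω, Set.indicator_of_mem hcounted]
    rfl
  · rw [Set.indicator_of_notMem hω]
    exact Set.indicator_nonneg (fun _ _ => zero_le_one) _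

end Counted

end Template

section WithHighProbability

variable {Ω : ℕ → Type*} [∀ n, MeasurableSpace (Ω n)] {P : ∀ n, Measure (Ω n)}
  {X Y : ∀ n, Ω n → ℝ}

/-- With `P n`-probability tending to one, `Y n` is at least a constant multiple of `n ^ g`:
the notion of a lower bound of the right order for the optimal count. -/
def WhpAtLeastRpow (P : ∀ n, Measure (Ω n)) (g : ℝ) (Y : ∀ n, Ω n → ℝ) : Prop :=
  ∃ c, 0 < c ∧ Tendsto (fun n : ℕ => P n {ω | Y n ω < c * (n : ℝ) ^ g}) atTop (𝓝 0)

theorem WhpAtLeastRpow.tendsto_measure_le_div {f g C δ : ℝ} (hY : WhpAtLeastRpow P g Y)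
    (hX : ∀ n : ℕ, 0 < n → ∀ θ, 0 < θ → P n {ω | θ ≤ X n ω} ≤ ENNReal.ofReal (C * n ^ f / θ))
    (hfg : f < g) (hδ : 0 < δ) :
    Tendsto (fun n => P n {ω | δ ≤ X n ω / Y n ω}) atTop (𝓝 0) := by
  obtain ⟨c, hc, hlow⟩ := hY
  have hlim : Tendsto (fun n : ℕ => ENNReal.ofReal (C / (δ * c) * (n : ℝ) ^ (-(g - f))))
      atTop (𝓝 0) := by
    have := ((tendsto_rpow_neg_atTop (sub_pos.2 hfg)).comp
      tendsto_natCast_atTop_atTop).const_mul (C / (δ * c))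
    simpa using ENNReal.tendsto_ofReal this
  refine tendsto_of_tendsto_of_tendsto_of_le_of_le' tendsto_const_nhds
    (by simpa only [add_zero] using hlow.add hlim) (.of_forall fun _ => zero_le) ?_
  filter_upwards [eventually_gt_atTop 0] with n hn
  have hratio : C * (n : ℝ) ^ f / (δ * (c * (n : ℝ) ^ g)) =
      C / (δ * c) * (n : ℝ) ^ (-(g - f)) := by
    rw [neg_sub, Real.rpow_sub (by positivity)]
    field_simp
  have hupp := hX n hn (δ * (c * (n : ℝ) ^ g)) (by positivity)
  rw [hratio] at hupp
  have hsub : {ω | δ ≤ X n ω / Y n ω} ⊆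
      {ω | Y n ω < c * (n : ℝ) ^ g} ∪ {ω | δ * (c * (n : ℝ) ^ g) ≤ X n ω} := by
    refine fun ω hω => or_iff_not_imp_left.2 fun hYω => ?_
    have hYω : c * (n : ℝ) ^ g ≤ Y n ω := not_lt.1 hYω
    have hpos : 0 < Y n ω := lt_of_lt_of_le (by positivity) hYω
    exact (mul_le_mul_of_nonneg_left hYω hδ.le).trans ((le_div_iff₀ hpos).1 hω)
  exact (measure_mono hsub).trans ((measure_union_le _ _).trans (add_le_add_right hupp _))

theorem tendsto_measure_le_div_of_eventually_ae_eq_zero {δ : ℝ}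
    (h : ∀ᶠ n in atTop, ∀ᵐ ω ∂P n, X n ω = 0 ∨ Y n ω = 0) (hδ : 0 < δ) :
    Tendsto (fun n => P n {ω | δ ≤ X n ω / Y n ω}) atTop (𝓝 0) := by
  refine tendsto_const_nhds.congr' ?_
  filter_upwards [h] with n hn
  exact (measure_eq_zero_iff_ae_notMem.2 (hn.mono fun ω hω =>
    not_le.2 ((div_eq_zero_iff.2 hω).trans_lt hδ))).symm

end WithHighProbability

section BalancedExponent

variable {k d : ℕ} [NeZero k] {H : SimpleGraph (Fin k)} {τ γ a b : ℝ} {β : Fin k → Fin k → ℝ}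

theorem sum_minBeta_of_const (hβ : ∀ i j, i < j → β i j = b) :
    ∑ j, minBeta β j = (k - 1) * b := by
  have hminBeta (j : Fin k) (hj : j ∈ univ.erase 0) : minBeta β j = b := by
    obtain ⟨i, hij, hi⟩ := exists_lt_eq_minBeta β (Fin.pos_iff_ne_zero.2 (ne_of_mem_erase hj))
    rw [← hi, hβ i j hij]
  rw [← add_sum_erase _ _ (mem_univ 0), minBeta_eq_zero β rfl, zero_add, sum_congr rfl hminBeta,
    sum_const, card_erase_of_mem (mem_univ 0), card_univ, Fintype.card_fin, nsmul_eq_mul,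
    Nat.cast_sub NeZero.one_le, Nat.cast_one]

open scoped Classical in
theorem fExp_of_balanced (hab : d * b = 2 * a - 1) (hβ : ∀ i j, i < j → β i j = b) :
    fExp τ γ d H (fun _ => a) β = k * (1 + (1 - τ) * a) + (k - 1) * (d * b) := by
  have hedge (p : Fin k × Fin k) (hp : p.1 < p.2) : min (a + a - d * β p.1 p.2 - 1) 0 = 0 :=
    min_eq_right (by rw [hβ _ _ hp]; linarith)
  rw [fExp, sum_minBeta_of_const hβ, sum_eq_zero fun p hp => hedge p (mem_filter.1 hp).2.1]
  simp only [sum_const, card_univ, Fintype.card_fin, nsmul_eq_mul]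
  ring

theorem rpow_fExp_of_balanced (hab : d * b = 2 * a - 1) {N : ℝ} (hN : 0 < N) :
    N ^ fExp τ γ d H (fun _ => a) (fun _ _ => b) =
      (N ^ (1 + (1 - τ) * a)) ^ k * ((N ^ b) ^ d) ^ (k - 1) := by
  have hk : ((k - 1 : ℕ) : ℝ) = k - 1 := by rw [Nat.cast_sub NeZero.one_le, Nat.cast_one]
  rw [fExp_of_balanced hab fun _ _ _ => rfl, Real.rpow_add hN, mul_comm (k : ℝ),
    Real.rpow_mul hN.le, Real.rpow_natCast, ← hk, mul_comm _ (d * b), Real.rpow_mul hN.le,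
    Real.rpow_natCast, mul_comm (d : ℝ), Real.rpow_mul hN.le, Real.rpow_natCast]

end BalancedExponent

section LowerBound

variable {k d : ℕ} [NeZero k] {s : StarKind} {H : SimpleGraph (Fin k)} {τ γ μbar ε t η a b : ℝ}
  {ρ : Fin k → Fin k → ℝ} (hγ : 0 < γ) (hμ : 0 < μbar) (hε : 0 < ε) (hη : 0 < η)
  (hab : d * b = 2 * a - 1) (hρ : IsTemplate s H μbar ε d t η ρ)
include hγ hμ hε hη hab hρ

theorem measure_starNM_lt_le_of_template {n : ℕ} (hn : 0 < n) {z : Fin k → Torus d}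
    (hz : ∀ i j, i < j → dist (z i) (z j) = ρ i j * (n : ℝ) ^ b) {μW : Measure ℝ}
    [IsProbabilityMeasure μW] {W : Set ℝ} (hW : MeasurableSet W) (hW0 : 0 < μW.real W)
    (hWsub : W ⊆ windowIcc ε ((n : ℝ) ^ a)) (hWle : W ⊆ Set.Iic (t * (n : ℝ) ^ a))
    (hηn : 2 * (η * (n : ℝ) ^ b) ≤ 1) {κ : ℝ} (hκ0 : 0 < κ)
    (hκ : (∏ p : Fin k × Fin k with p.1 < p.2,
      coinLaw (templateCoin s H γ μbar ε d t η ρ p)).toReal = κ)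
    {q : ℝ} (hq : 0 < q) (hq1 : q ≤ 1)
    (hqW : q ≤ n * μW.real W * (6 * ((1 / ε + η) * (n : ℝ) ^ b)) ^ d)
    (hI : (n : ℝ) ^ k / 2 ≤ #{v : Fin k → Fin n | Function.Injective v}) :
    girgMeasure μW d n {ω | (starNM s H γ μbar ε (fun _ => a) (fun _ _ => b) d n ω : ℝ) <
        (n * μW.real W) ^ k * ((2 * (η * (n : ℝ) ^ b)) ^ d) ^ (k - 1) * κ / 4} ≤
      ENNReal.ofReal (16 * 2 ^ k * k ^ k * ((3 * (1 / ε + η) / η) ^ d) ^ (2 * (k - 1)) /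
        (q ^ k * κ ^ 2) / (n * μW.real W)) := by
  have : 0 < (n : ℝ) ^ b := by positivity
  have hy (j) : ‖z j - z 0‖ + η * (n : ℝ) ^ b ≤ (1 / ε + η) * (n : ℝ) ^ b := by
    rw [add_mul, ← dist_eq_norm]
    gcongr
    obtain rfl | hj := eq_or_ne j 0
    · rw [dist_self]
      positivity
    · rw [dist_comm, hz 0 j (Fin.pos_iff_ne_zero.2 hj)]
      gcongr
      linarith [(hρ 0 j (Fin.pos_iff_ne_zero.2 hj)).2.1]
  have hsecond := GirgPattern.measure_sum_indicator_pinned_lt_le (root := 0) (μW := μW) hn hW hW0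
    (sub_self (z 0)) (by positivity) hηn hy swap_notMem_filter_fst_lt_snd
    measurableSet_templateCoin hκ hκ0 hq hq1 hqW
    (I := {v : Fin k → Fin n | Function.Injective v}) (fun v hv => (mem_filter.1 hv).2)
    (by rwa [Fintype.card_fin])
  rw [Fintype.card_fin, show 3 * ((1 / ε + η) * (n : ℝ) ^ b) / (η * (n : ℝ) ^ b) =
    3 * (1 / ε + η) / η by field_simp] at hsecond
  exact (measure_mono fun ω hω => (sum_indicator_templatePattern_le_starNM hz hρ hn hγ.le hμ hε hab
    hWsub hWle (by positivity) hW ω fun v hv => (mem_filter.1 hv).2).trans_lt hω).trans hsecond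

theorem exists_measure_starNM_lt_le_of_template {μW : Measure ℝ} [IsProbabilityMeasure μW]
    (hη1 : 2 * η ≤ 1) (hb : b ≤ 0) (hab0 : 0 ≤ 1 + (1 - τ) * a + d * b) {c₀ : ℝ} (hc₀ : 0 < c₀) :
    ∃ c₁ C, 0 < c₁ ∧ ∀ n : ℕ, 0 < n → ∀ z : Fin k → Torus d,
      (∀ i j, i < j → dist (z i) (z j) = ρ i j * (n : ℝ) ^ b) →
      c₀ * (n : ℝ) ^ ((1 - τ) * a) ≤
        μW.real (windowIcc ε ((n : ℝ) ^ a) ∩ Set.Iic (t * (n : ℝ) ^ a)) →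
      (n : ℝ) ^ k / 2 ≤ #{v : Fin k → Fin n | Function.Injective v} →
      girgMeasure μW d n {ω | (starNM s H γ μbar ε (fun _ => a) (fun _ _ => b) d n ω : ℝ) <
          c₁ * (n : ℝ) ^ fExp τ γ d H (fun _ => a) (fun _ _ => b)} ≤
        ENNReal.ofReal (C / (c₀ * (n : ℝ) ^ (1 + (1 - τ) * a))) := by
  set κ := (∏ p : Fin k × Fin k with p.1 < p.2,
    coinLaw (templateCoin s H γ μbar ε d t η ρ p)).toReal with hκ
  have hκ0 : 0 < κ := toReal_prod_coinLaw_templateCoin_pos hγ hμ hε hρ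
  set q := min 1 (c₀ * (6 * (1 / ε + η)) ^ d)
  have hq : 0 < q := lt_min one_pos (by positivity)
  refine ⟨c₀ ^ k * ((2 * η) ^ d) ^ (k - 1) * κ / 4, 16 * 2 ^ k * k ^ k *
    ((3 * (1 / ε + η) / η) ^ d) ^ (2 * (k - 1)) / (q ^ k * κ ^ 2), by positivity,
    fun n hn z hz hweight hI => ?_⟩
  set W := windowIcc ε ((n : ℝ) ^ a) ∩ Set.Iic (t * (n : ℝ) ^ a)
  have hn1 : (1 : ℝ) ≤ n := by exact_mod_cast hn
  have hnw : c₀ * (n : ℝ) ^ (1 + (1 - τ) * a) ≤ n * μW.real W := by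
    rw [Real.rpow_add (by positivity), Real.rpow_one]
    nlinarith
  have hnb : (n : ℝ) ^ b ≤ 1 := Real.rpow_le_one_of_one_le_of_nonpos hn1 hb
  have hqW : q ≤ n * μW.real W * (6 * ((1 / ε + η) * (n : ℝ) ^ b)) ^ d := by
    have hscale : 1 ≤ (n : ℝ) ^ (1 + (1 - τ) * a) * ((n : ℝ) ^ b) ^ d := by
      rw [← Real.rpow_mul_natCast (by positivity), ← Real.rpow_add (by positivity), mul_comm b]
      exact Real.one_le_rpow hn1 hab0
    calc q ≤ c₀ * (6 * (1 / ε + η)) ^ d := min_le_right _ _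
      _ ≤ c₀ * (6 * (1 / ε + η)) ^ d * ((n : ℝ) ^ (1 + (1 - τ) * a) * ((n : ℝ) ^ b) ^ d) :=
        le_mul_of_one_le_right (by positivity) hscale
      _ = c₀ * (n : ℝ) ^ (1 + (1 - τ) * a) * (6 * ((1 / ε + η) * (n : ℝ) ^ b)) ^ d := by
        rw [← mul_assoc 6, mul_pow (6 * _)]
        ring
      _ ≤ _ := by gcongr
  have hbound := measure_starNM_lt_le_of_template hγ hμ hε hη hab hρ hn hz
    (W := W) (measurableSet_Icc.inter measurableSet_Iic) (lt_of_lt_of_le (by positivity) hweight)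
    Set.inter_subset_left Set.inter_subset_right (by nlinarith) hκ0 hκ.symm hq (min_le_left _ _)
    hqW hI
  refine (measure_mono (Set.ofPred_subset_ofPred.2 fun ω hω => hω.trans_le ?_)).trans
    (hbound.trans (ENNReal.ofReal_le_ofReal (by gcongr)))
  calc _ = (c₀ * (n : ℝ) ^ (1 + (1 - τ) * a)) ^ k * ((2 * (η * (n : ℝ) ^ b)) ^ d) ^ (k - 1) *
        κ / 4 := by
        rw [rpow_fExp_of_balanced hab (by positivity), ← mul_assoc 2, mul_pow c₀, mul_pow (2 * η),
          mul_pow ((2 * η) ^ d)]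
        ring
    _ ≤ _ := by gcongr

end LowerBound

theorem whpAtLeastRpow_starNM_of_template {k d : ℕ} [NeZero k] {s : StarKind}
    {H : SimpleGraph (Fin k)} {τ γ μbar ε t a b : ℝ} {ρ : Fin k → Fin k → ℝ} (hγ : 0 < γ)
    (hμ : 0 < μbar) (hε : 0 < ε) (hab : d * b = 2 * a - 1)
    (hρ : IsTemplate s H μbar ε d t 0 ρ) {μW : Measure ℝ} [IsProbabilityMeasure μW]
    (hb : b ≤ 0) (ha : 0 < 1 + (1 - τ) * a)
    (hab0 : 0 ≤ 1 + (1 - τ) * a + d * b) {z : ℕ → Fin k → Torus d}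
    (hz : ∀ᶠ n in atTop, ∀ i j, i < j → dist (z n i) (z n j) = ρ i j * (n : ℝ) ^ b)
    (hweight : ∀ t', t < t' → ∃ c₀, 0 < c₀ ∧ ∀ᶠ n : ℕ in atTop, c₀ * (n : ℝ) ^ ((1 - τ) * a) ≤
      μW.real (windowIcc ε ((n : ℝ) ^ a) ∩ Set.Iic (t' * (n : ℝ) ^ a))) :
    WhpAtLeastRpow (girgMeasure μW d) (fExp τ γ d H (fun _ => a) (fun _ _ => b))
      fun n ω => starNM s H γ μbar ε (fun _ => a) (fun _ _ => b) d n ω := by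
  obtain ⟨η, hη, hη1, hρη⟩ := hρ.exists_pos
  obtain ⟨c₀, hc₀, hweight⟩ := hweight (t + η) (by linarith)
  obtain ⟨c₁, C, hc₁, hbound⟩ := exists_measure_starNM_lt_le_of_template (τ := τ) (μW := μW)
    hγ hμ hε hη hab hρη hη1 hb hab0 hc₀
  have hlim : Tendsto (fun n : ℕ => ENNReal.ofReal (C / (c₀ * (n : ℝ) ^ (1 + (1 - τ) * a))))
      atTop (𝓝 0) := by
    rw [← ENNReal.ofReal_zero]
    exact ENNReal.tendsto_ofReal (tendsto_const_nhds.div_atTop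
      (((tendsto_rpow_atTop ha).comp tendsto_natCast_atTop_atTop).const_mul_atTop hc₀))
  refine ⟨c₁, hc₁, tendsto_of_tendsto_of_tendsto_of_le_of_le' tendsto_const_nhds hlim
    (.of_forall fun _ => zero_le) ?_⟩
  filter_upwards [eventually_gt_atTop 0, hz, hweight, eventually_half_pow_le_card_injective k]
    with n hn hzn hweightn hI using hbound n hn (z n) hzn hweightn hI

section Configuration

variable {k d n : ℕ} {s : StarKind} {H : SimpleGraph (Fin k)} {γ μbar ε : ℝ} {μW : Measure ℝ}
  [IsProbabilityMeasure μW] (hn : 0 < n) (hγ : 0 ≤ γ) (hμ : 0 < μbar) (hε : 0 < ε)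
include hn hγ hμ hε

theorem exists_configuration_of_not_ae_eq_zero {α : Fin k → ℝ} {β : Fin k → Fin k → ℝ}
    {p : ℝ → Prop} (hp : ∀ᵐ t ∂μW, p t)
    (hne : ¬∀ᵐ ω ∂girgMeasure μW d n, starNM s H γ μbar ε α β d n ω = 0) :
    ∃ (x : Fin k → Torus d) (u : Fin k → ℝ), (∀ i, p (u i)) ∧
      (∀ i, u i ∈ windowIcc ε ((n : ℝ) ^ α i)) ∧ ∀ i j, i < j →
        dist (x i) (x j) ∈ Set.Ioo (ε * (n : ℝ) ^ β i j) ((n : ℝ) ^ β i j / ε) ∧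
        (s = .ind → ¬H.Adj i j → u i * u j < n * μbar * dist (x i) (x j) ^ d) := by
  have hboundary : ∀ᵐ ω ∂girgMeasure μW d n, ∀ i j : Fin k, ∀ u v, u ≠ v →
      dist (ω.2.1 u) (ω.2.1 v) ≠ ε * (n : ℝ) ^ β i j ∧
        dist (ω.2.1 u) (ω.2.1 v) ≠ (n : ℝ) ^ β i j / ε := by
    refine ae_all_iff.2 fun i => ae_all_iff.2 fun j => ?_
    filter_upwards [ae_girgMeasure_position μW d n
        (ae_dist_ne (r := ε * (n : ℝ) ^ β i j) (by positivity)),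
      ae_girgMeasure_position μW d n (ae_dist_ne (r := (n : ℝ) ^ β i j / ε) (by positivity))]
      with ω hlow hupp u v huv using ⟨hlow u v huv, hupp u v huv⟩
  obtain ⟨ω, hω, hcoin, hweight, hdist⟩ := ((not_eventually.1 hne).and_eventually
    ((ae_girgMeasure_coin_le_one μW d n).and
      ((ae_girgMeasure_weight μW d n hp).and hboundary))).exists
  rw [starNM_eq_ncard] at hω
  obtain ⟨v, ⟨hinj, hwindow, hdistwindow⟩, -, hnonedge⟩ := Set.nonempty_of_ncard_ne_zero hω
  refine ⟨ω.2.1 ∘ v, ω.1 ∘ v, fun i => hweight _, hwindow, fun i j hij => ?_⟩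
  have hvij : v i ≠ v j := hinj.ne hij.ne
  obtain ⟨hlow, hupp⟩ := hdistwindow i j hij
  obtain ⟨hlow', hupp'⟩ := hdist i j (v i) (v j) hvij
  refine ⟨⟨hlow.lt_of_ne hlow'.symm, hupp.lt_of_ne hupp'⟩, fun hs hadj => ?_⟩
  have : 0 < dist (ω.2.1 (v i)) (ω.2.1 (v j)) := lt_of_lt_of_le (by positivity) hlow
  refine lt_of_not_ge fun hle => hnonedge hs i j hij hadj ?_
  exact girgEdge_of_le_mul hγ hvij (hcoin _) (by positivity) hle

variable [NeZero k] {a b : ℝ}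

/- The smallest weight of an outcome that realises `H` works as the bound `t`. -/
theorem exists_isTemplate_of_not_ae_eq_zero (hab : d * b = 2 * a - 1) {p : ℝ → Prop}
    (hp : ∀ᵐ t ∂μW, p t)
    (hne : ¬∀ᵐ ω ∂girgMeasure μW d n,
      starNM s H γ μbar ε (fun _ => a) (fun _ _ => b) d n ω = 0) :
    ∃ (x : Fin k → Torus d) (t : ℝ), p t ∧ t ∈ windowIcc ε ((n : ℝ) ^ a) ∧
      IsTemplate s H μbar ε d (t / (n : ℝ) ^ a) 0
        fun i j => dist (x i) (x j) / (n : ℝ) ^ b := by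
  obtain ⟨x, u, hpu, hu, hx⟩ := exists_configuration_of_not_ae_eq_zero hn hγ hμ hε hp hne
  obtain ⟨i₀, hmin⟩ := Finite.exists_min u
  have hmin0 : 0 < u i₀ := lt_of_lt_of_le (by positivity) (hu i₀).1
  refine ⟨x, u i₀, hpu i₀, hu i₀, fun i j hij => ?_⟩
  obtain ⟨⟨hlow, hupp⟩, hnonedge⟩ := hx i j hij
  rw [mul_zero, sub_zero, add_zero]
  refine ⟨(lt_div_iff₀ (by positivity)).2 hlow, (div_lt_iff₀ (by positivity)).2
    (hupp.trans_eq (by ring)), fun hs hadj => ?_⟩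
  have hscale : (n : ℝ) ^ a * (n : ℝ) ^ a = n * ((n : ℝ) ^ b) ^ d := by
    rw [← Real.rpow_mul_natCast (by positivity), mul_comm b, ← Real.rpow_add (by positivity),
      show a + a = 1 + d * b by linarith, Real.rpow_add (by positivity), Real.rpow_one]
  rw [div_mul_div_comm, div_pow, ← mul_div_assoc, div_lt_div_iff₀ (by positivity) (by positivity),
    hscale]
  calc u i₀ * u i₀ * ((n : ℝ) ^ b) ^ d ≤ u i * u j * ((n : ℝ) ^ b) ^ d := by
        gcongr
        exacts [hmin0.le.trans (hmin i), hmin i, hmin j]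
    _ < n * μbar * dist (x i) (x j) ^ d * ((n : ℝ) ^ b) ^ d := by
        exact mul_lt_mul_of_pos_right (hnonedge hs hadj) (by positivity)
    _ = _ := by ring

end Configuration

theorem dist_le_quarter_of_isTemplate {k d : ℕ} [NeZero k] {s : StarKind} {H : SimpleGraph (Fin k)}
    {μbar ε t r : ℝ} {x : Fin k → Torus d} (hε : 0 < ε) (hr : 0 < r) (hrε : r ≤ ε / 4)
    (hρ : IsTemplate s H μbar ε d t 0 fun i j => dist (x i) (x j) / r) (i : Fin k) :
    dist (x i) (x 0) ≤ 1 / 4 := by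
  obtain rfl | hi := eq_or_ne i 0
  · simp
  have hupp := (hρ 0 i (Fin.pos_iff_ne_zero.2 hi)).2.1
  rw [mul_zero, add_zero, div_lt_div_iff₀ hr hε, one_mul] at hupp
  rw [dist_comm]
  nlinarith

section Dichotomy

variable {k d : ℕ} [NeZero k] {s : StarKind} {H : SimpleGraph (Fin k)} {τ γ μbar ε : ℝ}
  {μW : Measure ℝ} [IsProbabilityMeasure μW] (hγ : 0 < γ) (hμ : 0 < μbar) (hε : 0 < ε)
include hγ hμ hε

theorem whpAtLeastRpow_starNM_half {c : ℝ} (hε1 : ε < 1) (hτ : τ ∈ Set.Ioo 1 3)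
    (hW : WeightTail τ c μW)
    (hne : ∃ᶠ n in atTop, ¬∀ᵐ ω ∂girgMeasure μW d n,
      starNM s H γ μbar ε (fun _ => 1 / 2) (fun _ _ => 0) d n ω = 0) :
    WhpAtLeastRpow (girgMeasure μW d) (fExp τ γ d H (fun _ => 1 / 2) fun _ _ => 0)
      fun n ω => starNM s H γ μbar ε (fun _ => 1 / 2) (fun _ _ => 0) d n ω := by
  have hab : (d : ℝ) * 0 = 2 * (1 / 2) - 1 := by norm_num
  obtain ⟨hτ1, hτ3⟩ := hτ
  obtain ⟨n, hnen, hn⟩ := (hne.and_eventually (eventually_gt_atTop 0)).exists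
  obtain ⟨x, t, -, ht, hρ⟩ := exists_isTemplate_of_not_ae_eq_zero (p := fun _ => True) hn hγ.le hμ
    hε hab (by simp) hnen
  refine whpAtLeastRpow_starNM_of_template hγ hμ hε hab hρ le_rfl (by linarith) (by linarith)
    (z := fun _ => x) (.of_forall fun m i j _ => by simp) fun t' ht' => ?_
  have hεt' : ε < t' := ((le_div_iff₀ (by positivity)).2 ht.1).trans_lt ht'
  have hε1' : ε < 1 / ε := hε1.trans (one_lt_one_div hε hε1)
  obtain ⟨c₀, hc₀, hmass⟩ := hW.exists_le_measureReal_Ioc hτ1 hε (lt_min hεt' hε1')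
  refine ⟨c₀, hc₀, ?_⟩
  filter_upwards [((tendsto_rpow_atTop (y := 1 / 2) (by norm_num)).comp
    tendsto_natCast_atTop_atTop).eventually hmass] with m hm
  have hm0 : 0 ≤ (m : ℝ) ^ (1 / 2 : ℝ) := by positivity
  rw [mul_comm (1 - τ), Real.rpow_mul (by positivity)]
  refine hm.trans (measureReal_mono fun w hw => ⟨⟨hw.1.le, hw.2.trans ?_⟩, hw.2.trans ?_⟩)
  · exact (mul_le_mul_of_nonneg_right (min_le_right _ _) hm0).trans_eq (by ring)
  · exact mul_le_mul_of_nonneg_right (min_le_left _ _) hm0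

/- The weight bound `t` is taken in the support of the weights conditioned to the window, so that
`[0, t']` has positive mass for every `t' > t`. -/
theorem whpAtLeastRpow_starNM_zero (hd : 0 < d)
    (hne : ∃ᶠ n in atTop, ¬∀ᵐ ω ∂girgMeasure μW d n,
      starNM s H γ μbar ε (fun _ => 0) (fun _ _ => -(1 / (d : ℝ))) d n ω = 0) :
    WhpAtLeastRpow (girgMeasure μW d) (fExp τ γ d H (fun _ => 0) fun _ _ => -(1 / (d : ℝ)))
      fun n ω => starNM s H γ μbar ε (fun _ => 0) (fun _ _ => -(1 / (d : ℝ))) d n ω := by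
  have hd0 : (0 : ℝ) < d := by exact_mod_cast hd
  set b : ℝ := -(1 / (d : ℝ)) with hb
  have hb0 : b < 0 := by simpa [hb]
  have hab : d * b = 2 * 0 - 1 := by
    rw [hb]
    field_simp
    norm_num
  have hsmall : ∀ᶠ n : ℕ in atTop, (n : ℝ) ^ b < ε / 4 :=
    ((tendsto_rpow_neg_atTop (one_div_pos.2 hd0)).comp
      tendsto_natCast_atTop_atTop).eventually_lt_const (by positivity)
  have hsupp : ∀ᵐ t ∂μW, t ∈ windowIcc ε 1 → t ∈ (μW.restrict (windowIcc ε 1)).support :=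
    (ae_restrict_iff' measurableSet_Icc).1 Measure.support_mem_ae
  obtain ⟨n, hnen, hn, hnb⟩ := (hne.and_eventually
    ((eventually_gt_atTop 0).and hsmall)).exists
  obtain ⟨x, t, ht, htwindow, hρ⟩ := exists_isTemplate_of_not_ae_eq_zero hn hγ.le hμ hε hab hsupp
    hnen
  obtain ⟨z, hz⟩ := exists_dilation_torus x 0
    (dist_le_quarter_of_isTemplate hε (by positivity) hnb.le hρ)
  refine whpAtLeastRpow_starNM_of_template hγ hμ hε hab hρ hb0.le (by simp) (by linarith)
    (z := fun m => z ((m : ℝ) ^ b / (n : ℝ) ^ b)) ?_ fun t' ht' => ?_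
  · filter_upwards [eventually_ge_atTop n] with m hm i j _
    rw [hz _ ⟨by positivity, (div_le_one (by positivity)).2
      (Real.rpow_le_rpow_of_nonpos (by positivity) (by exact_mod_cast hm) hb0.le)⟩]
    ring
  · simp only [Real.rpow_zero, div_one, mul_one, mul_zero] at ht htwindow ht' ⊢
    have hpos := (Measure.mem_support_iff_forall t).1 (ht htwindow) _ (Iic_mem_nhds ht')
    rw [Measure.restrict_apply measurableSet_Iic, Set.inter_comm] at hpos
    exact ⟨_, ENNReal.toReal_pos hpos.ne' (measure_ne_top _ _), .of_forall fun _ => le_rfl⟩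

end Dichotomy

section Optimization

variable {k d : ℕ} {s : StarKind} {H : SimpleGraph (Fin k)} {τ γ μbar ε : ℝ}
  {α α' : Fin k → ℝ} {β β' : Fin k → Fin k → ℝ}

theorem starNM_congr (h : ∀ i j, i < j → β i j = β' i j) {n : ℕ} {ω : GirgΩ d n} :
    starNM s H γ μbar ε α β d n ω = starNM s H γ μbar ε α β' d n ω := by
  have hMset : Mset ε α β d n ω.1 ω.2.1 = Mset ε α β' d n ω.1 ω.2.1 := by
    ext v
    exact and_congr_right' (and_congr_right' (forall₃_congr fun i j hij => by rw [h i j hij]))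
  rw [starNM_eq_ncard, starNM_eq_ncard, starTuples, starTuples, hMset]

theorem starIsOptimal_iff : starIsOptimal s τ γ d H α β ↔
    Feasible τ d α β ∧ (s = .ind → IndConstr d H α β) ∧
      ∀ α' β', Feasible τ d α' β' → (s = .ind → IndConstr d H α' β') →
        fExp τ γ d H α' β' ≤ fExp τ γ d H α β := by
  cases s <;> simp [starIsOptimal, IsOptimalInd, IsOptimalSub]

theorem UniquelyOptimal.fExp_lt (hopt : UniquelyOptimal s τ γ d H α β)
    (hfeas : Feasible τ d α' β') (hind : s = .ind → IndConstr d H α' β')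
    (hne : ¬(α' = α ∧ ∀ i j, i < j → β' i j = β i j)) :
    fExp τ γ d H α' β' < fExp τ γ d H α β := by
  obtain ⟨-, -, hle⟩ := starIsOptimal_iff.1 hopt.1
  refine (hle α' β' hfeas hind).lt_of_ne fun heq => hne (hopt.2 α' β' (starIsOptimal_iff.2
    ⟨hfeas, hind, fun α'' β'' hfeas' hind' => heq ▸ hle α'' β'' hfeas' hind'⟩))

/- Otherwise `(0, -1/d)`, of value one, would be better. -/
theorem lt_three_of_starIsOptimal_half [NeZero k] (hd : 0 < d) (hτ : 1 ≤ τ)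
    (hβ : ∀ i j, i < j → β i j = 0) (hopt : starIsOptimal s τ γ d H (fun _ => 1 / 2) β) :
    τ < 3 := by
  have : (0 : ℝ) < d := by exact_mod_cast hd
  have hdb : (d : ℝ) * -(1 / d) = -1 := by
    field_simp
  have hfeas : Feasible (k := k) τ d (fun _ => 0) fun _ _ => -(1 / (d : ℝ)) :=
    ⟨fun _ => ⟨le_rfl, one_div_nonneg.2 (by linarith)⟩,
      fun _ _ _ => ⟨le_rfl, neg_nonpos.2 (by positivity)⟩, fun _ _ _ _ _ _ => by simp [bsym]⟩
  have hind : IndConstr d H (fun _ => 0) fun _ _ => -(1 / (d : ℝ)) :=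
    fun _ _ _ _ => by linarith
  have hle := (starIsOptimal_iff.1 hopt).2.2 _ _ hfeas fun _ => hind
  rw [fExp_of_balanced (b := -(1 / d)) (by linarith) fun _ _ _ => rfl,
    fExp_of_balanced (b := 0) (by norm_num) hβ, hdb] at hle
  have : (0 : ℝ) < k := by exact_mod_cast NeZero.pos k
  by_contra! hτ3
  nlinarith

theorem eventually_ae_starNM_ind_eq_zero {μW : Measure ℝ} (hγ : 0 ≤ γ) (hμ : 0 < μbar)
    (hε : 0 < ε) (h : ¬IndConstr d H α β) :
    ∀ᶠ n in atTop, ∀ᵐ ω ∂girgMeasure μW d n, starNM .ind H γ μbar ε α β d n ω = 0 := by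
  unfold IndConstr at h
  push Not at h
  obtain ⟨i, j, hij, hadj, hlt⟩ := h
  have hlarge : Tendsto (fun n : ℕ => ε * ε / (μbar * (1 / ε) ^ d) *
      (n : ℝ) ^ (α i + α j - d * β i j - 1)) atTop atTop :=
    ((tendsto_rpow_atTop (by linarith)).comp tendsto_natCast_atTop_atTop).const_mul_atTop
      (by positivity)
  filter_upwards [hlarge.eventually_ge_atTop 1, eventually_gt_atTop 0] with n hone hn
  filter_upwards [ae_girgMeasure_coin_le_one μW d n] with ω hcoin
  rw [starNM_eq_ncard, Set.ncard_eq_zero, Set.eq_empty_iff_forall_notMem]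
  rintro v ⟨⟨hinj, hweight, hdist⟩, -, hnonedge⟩
  have hconn := le_connProb_of_scaled (r := 1 / ε) hγ hμ hn hε.le hε.le (hweight i).1
    (hweight j).1 (lt_of_lt_of_le (by positivity) (hdist i j hij).1)
    ((hdist i j hij).2.trans_eq (by ring))
  rw [min_eq_left (Real.one_le_rpow hone hγ)] at hconn
  exact hnonedge rfl i j hij hadj ⟨hinj.ne hij.ne, (hcoin _).trans hconn⟩

theorem whpAtLeastRpow_starNM_of_starIsOptimal [NeZero k] (hd : 0 < d) {c : ℝ} (hτ : 1 < τ)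
    (hγ : 0 < γ) (hμ : 0 < μbar) (hε : ε ∈ Set.Ioo 0 1) {μW : Measure ℝ} [IsProbabilityMeasure μW]
    (hW : WeightTail τ c μW) (hopt : starIsOptimal s τ γ d H α β)
    (hval : ((∀ i, α i = 1 / 2) ∧ ∀ i j, i < j → β i j = 0) ∨
      ((∀ i, α i = 0) ∧ ∀ i j, i < j → β i j = -(1 / (d : ℝ))))
    (hne : ∃ᶠ n in atTop, ¬∀ᵐ ω ∂girgMeasure μW d n, starNM s H γ μbar ε α β d n ω = 0) :
    WhpAtLeastRpow (girgMeasure μW d) (fExp τ γ d H α β)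
      fun n ω => starNM s H γ μbar ε α β d n ω := by
  have : (0 : ℝ) < d := by exact_mod_cast hd
  obtain ⟨hα, hβ⟩ | ⟨hα, hβ⟩ := hval <;> obtain rfl := funext hα <;>
    simp only [starNM_congr hβ] at hne ⊢
  · have hab : (d : ℝ) * 0 = 2 * (1 / 2) - 1 := by norm_num
    rw [fExp_of_balanced hab hβ, ← fExp_of_balanced hab fun _ _ _ => rfl]
    exact whpAtLeastRpow_starNM_half hγ hμ hε.1 hε.2
      ⟨hτ, lt_three_of_starIsOptimal_half hd hτ.le hβ hopt⟩ hW hne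
  · have hab : (d : ℝ) * -(1 / (d : ℝ)) = 2 * 0 - 1 := by
      field_simp
      norm_num
    rw [fExp_of_balanced hab hβ, ← fExp_of_balanced hab fun _ _ _ => rfl]
    exact whpAtLeastRpow_starNM_zero hγ hμ hε.1 hd hne

end Optimization

theorem girg_suboptimal_count_ratio_general
    {k d : ℕ} (hd : 0 < d) {τ γ c : ℝ} (hτ : 2 < τ) (hγ : 0 < γ)
    {μW : Measure ℝ} [IsProbabilityMeasure μW] (hW : WeightTail τ c μW)
    {H : SimpleGraph (Fin k)} {s : StarKind} {αstar : Fin k → ℝ} {βstar : Fin k → Fin k → ℝ}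
    (hopt : UniquelyOptimal s τ γ d H αstar βstar)
    (hval : ((∀ i, αstar i = 1 / 2) ∧ ∀ i j, i < j → βstar i j = 0) ∨
      ((∀ i, αstar i = 0) ∧ ∀ i j, i < j → βstar i j = -(1 / (d : ℝ))))
    {α : Fin k → ℝ} {β : Fin k → Fin k → ℝ} (hfeas : Feasible τ d α β)
    (hne : ¬(α = αstar ∧ ∀ i j, i < j → β i j = βstar i j))
    {ε : ℝ} (hε : ε ∈ Set.Ioo 0 1) {δ : ℝ} (hδ : 0 < δ) :
    Tendsto (fun n : ℕ => girgMeasure μW d n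
        {ω | δ ≤ (starNM s H γ (wMean μW) ε α β d n ω : ℝ) /
          (starNM s H γ (wMean μW) ε αstar βstar d n ω : ℝ)}) atTop (𝓝 0) := by
  have hμ := wMean_pos hτ hW
  by_cases hind : s = .ind → IndConstr d H α β
  swap
  · obtain ⟨rfl, hviolated⟩ := Classical.not_imp.1 hind
    refine tendsto_measure_le_div_of_eventually_ae_eq_zero ?_ hδ
    filter_upwards [eventually_ae_starNM_ind_eq_zero (μW := μW) hγ.le hμ hε.1 hviolated] with n hn
    exact hn.mono fun ω hω => .inl (by exact_mod_cast hω)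
  by_cases hzero : ∀ᶠ n in atTop, ∀ᵐ ω ∂girgMeasure μW d n,
      starNM s H γ (wMean μW) ε αstar βstar d n ω = 0
  · refine tendsto_measure_le_div_of_eventually_ae_eq_zero ?_ hδ
    filter_upwards [hzero] with n hn using hn.mono fun ω hω => .inr (by exact_mod_cast hω)
  have : NeZero k := ⟨fun hk => by
    subst hk
    exact hne ⟨Subsingleton.elim _ _, fun i => i.elim0⟩⟩
  obtain ⟨C, hupper⟩ := exists_measure_le_starNM_le (by linarith) hW hγ.le hμ hε.1 s
  exact (whpAtLeastRpow_starNM_of_starIsOptimal hd (by linarith) hγ hμ hε hW hopt.1 hval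
    (not_eventually.1 hzero)).tendsto_measure_le_div hupper (hopt.fExp_lt hfeas hind hne) hδ

/-- Theorem `subgraphGIRGprob`, second part: under the
hypotheses of the previous theorem, for every feasible `(α,β) ≠ (α*,β*)` the ratio
`N^⋆(H; M_ε^{(α,β)}) / N^⋆(H; M_ε^{(α*,β*)})` tends to `0` in probability. -/
theorem girg_suboptimal_count_ratio
    {k d : ℕ} (hd : 1 ≤ d) (τ γ c : ℝ) (hτ : τ ∈ Set.Ioo (2:ℝ) 3) (hγ : 1 < γ)
    (μW : Measure ℝ) [IsProbabilityMeasure μW] (hW : WeightTail τ c μW)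
    (H : SimpleGraph (Fin k)) (s : StarKind)
    (αstar : Fin k → ℝ) (βstar : Fin k → Fin k → ℝ)
    (hopt : UniquelyOptimal s τ γ d H αstar βstar)
    (hval : ((∀ i, αstar i = 1/2) ∧ (∀ i j : Fin k, i < j → βstar i j = 0)) ∨
            ((∀ i, αstar i = 0) ∧ (∀ i j : Fin k, i < j → βstar i j = -(1 / (d:ℝ)))))
    (α : Fin k → ℝ) (β : Fin k → Fin k → ℝ) (hfeas : Feasible τ d α β)
    (hne : ¬(α = αstar ∧ ∀ i j : Fin k, i < j → β i j = βstar i j))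
    (ε : ℝ) (hε : ε ∈ Set.Ioo (0:ℝ) 1) :
    ∀ δ : ℝ, 0 < δ →
      Tendsto (fun n : ℕ => girgMeasure μW d n
          {ω | δ ≤ (starNM s H γ (wMean μW) ε α β d n ω : ℝ) /
                   (starNM s H γ (wMean μW) ε αstar βstar d n ω : ℝ)})
        atTop (nhds 0) := by
  intro δ hδ
  exact girg_suboptimal_count_ratio_general (Nat.zero_lt_of_lt hd) hτ.1 (by linarith) hW hopt hval
    hfeas hne hε hδ

end
end
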